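/- arXiv:2303.09533 — 3 statements merged into one kernel-verified Lean document; each statement's English description precedes it below -/
import Mathlib

section
/- (Dehn–Sommerville equations) For every n-dimensional simplicial convex polytope P ⊂ ℝⁿ and every integer k with −1 ≤ k ≤ n − 2, one has Σ_{j=k}^{n−1} (−1)^j · C(j+1, k+1) · f_j(P) = (−1)^{n−1} · f_k(P), where C denotes the binomial coefficient. -/
open scoped BigOperators

noncomputable section

/-- Dimension of a subset of a real vector space: the rank of its vector span. -/
def sdim {n : ℕ} (s : Set (EuclideanSpace ℝ (Fin n))) : ℕ :=
  Module.finrank ℝ (vectorSpan ℝ s)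

/-- An `n`-dimensional convex polytope in `ℝⁿ`: the convex hull of a finite set of
points, with nonempty interior. -/
structure ConvexPolytope (n : ℕ) where
  verts : Finset (EuclideanSpace ℝ (Fin n))
  nonempty_int :
    (interior (convexHull ℝ (verts : Set (EuclideanSpace ℝ (Fin n))))).Nonempty

/-- `F` is an `m`-simplex: the convex hull of `m` affinely independent points. -/
def IsSimplexSet {n : ℕ} (F : Set (EuclideanSpace ℝ (Fin n))) (m : ℕ) : Prop :=
  ∃ s : Finset (EuclideanSpace ℝ (Fin n)),
    s.card = m ∧
    AffineIndependent ℝ (fun v : s => (v : EuclideanSpace ℝ (Fin n))) ∧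
    F = convexHull ℝ (s : Set (EuclideanSpace ℝ (Fin n)))

namespace ConvexPolytope

variable {n : ℕ} (P : ConvexPolytope n)

/-- The underlying set of the polytope. -/
def carrier : Set (EuclideanSpace ℝ (Fin n)) :=
  convexHull ℝ (P.verts : Set (EuclideanSpace ℝ (Fin n)))

/-- The `k`-faces of `P`: the `k`-dimensional (nonempty) exposed faces of `P`. -/
def faces (k : ℕ) : Set (Set (EuclideanSpace ℝ (Fin n))) :=
  {F | IsExposed ℝ P.carrier F ∧ F.Nonempty ∧ sdim F = k}

/-- `f_k(P)`: the number of `k`-faces of `P` (for `0 ≤ k ≤ n`). -/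
def fcount (k : ℕ) : ℕ := (P.faces k).ncard

/-- The face numbers with integer index and the conventions `f₋₁ = fₙ = 1`. -/
def fZ (k : ℤ) : ℕ :=
  if k = -1 ∨ k = (n : ℤ) then 1
  else if 0 ≤ k ∧ k < (n : ℤ) then P.fcount k.toNat
  else 0

/-- `P` is simplicial: every facet is an `(n-1)`-simplex, i.e. the convex hull of `n`
affinely independent points. -/
def IsSimplicial : Prop :=
  ∀ F ∈ P.faces (n - 1), IsSimplexSet F n

/-- `P` is simple at edges: every `1`-dimensional face of `P` is contained in exactly
`n - 1` facets. -/
def SimpleAtEdges : Prop :=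
  ∀ L ∈ P.faces 1, {F ∈ P.faces (n - 1) | L ⊆ F}.ncard = n - 1

end ConvexPolytope

/-- The `l`-faces of a face `F`: the `l`-dimensional (nonempty) exposed faces of `F`. -/
def subfaces {n : ℕ} (F : Set (EuclideanSpace ℝ (Fin n))) (l : ℕ) :
    Set (Set (EuclideanSpace ℝ (Fin n))) :=
  {G | IsExposed ℝ F G ∧ G.Nonempty ∧ sdim G = l}
lemma ds_sum_Icc {ι : Type*} [DecidableEq ι] (A F : Finset ι) (h : A ⊆ F) :
    ∑ G ∈ Finset.Icc A F, (-1 : ℚ) ^ G.card = if A = F then (-1 : ℚ) ^ F.card else 0 := by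
  rw [Finset.Icc_eq_image_powerset h, Finset.sum_image]
  · have : ∀ x ∈ (F \ A).powerset, (-1 : ℚ) ^ (A ∪ x).card = (-1) ^ A.card * (-1 : ℚ) ^ x.card := by
      intro x hx
      rw [Finset.mem_powerset] at hx
      rw [Finset.card_union_of_disjoint, pow_add]
      exact (Finset.disjoint_sdiff).mono_right hx
    rw [Finset.sum_congr rfl this, ← Finset.mul_sum]
    have h2 := Finset.sum_powerset_neg_one_pow_card (x := F \ A)
    have h3 : ∑ x ∈ (F \ A).powerset, (-1 : ℚ) ^ x.card = if F \ A = ∅ then 1 else 0 := by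
      exact_mod_cast h2
    rw [h3]
    by_cases hAF : A = F
    · simp [hAF]
    · have : F \ A ≠ ∅ := by
        intro h'
        exact hAF (h.antisymm (Finset.sdiff_eq_empty_iff_subset.1 h'))
      simp [hAF, this]
  · intro x hx y hy hxy
    simp only [Finset.coe_powerset, Set.mem_preimage, Set.mem_powerset_iff, Finset.coe_subset] at hx hy
    simp only at hxy
    ext v
    have := congrArg (v ∈ ·) hxy
    simp only [Finset.mem_union, eq_iff_iff] at this
    have h1 := @hx v
    have h2 := @hy v
    simp only [Finset.mem_sdiff] at h1 h2
    tauto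

lemma ds_local {ι : Type*} [DecidableEq ι] (R F : Finset ι) (h : R ⊆ F) (m : ℕ) :
    ∑ G ∈ Finset.Icc R F, (-1 : ℚ) ^ G.card * (G.card.choose m : ℚ)
      = ∑ H ∈ Finset.Icc (F \ R) F, if H.card = m then (-1 : ℚ) ^ F.card else 0 := by
  have h1 : ∀ G ∈ Finset.Icc R F, (-1 : ℚ) ^ G.card * (G.card.choose m : ℚ)
      = ∑ H ∈ F.powersetCard m, if H ⊆ G then (-1 : ℚ) ^ G.card else 0 := by
    intro G hG
    rw [Finset.mem_Icc] at hG
    rw [← Finset.sum_filter, Finset.sum_const]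
    have : (F.powersetCard m).filter (· ⊆ G) = G.powersetCard m := by
      ext H
      simp only [Finset.mem_filter, Finset.mem_powersetCard]
      constructor
      · tauto
      · rintro ⟨a, b⟩
        exact ⟨⟨a.trans hG.2, b⟩, a⟩
    rw [this, Finset.card_powersetCard, nsmul_eq_mul, mul_comm]
  rw [Finset.sum_congr rfl h1, Finset.sum_comm]
  have h2 : ∀ H ∈ F.powersetCard m, (∑ G ∈ Finset.Icc R F, if H ⊆ G then (-1 : ℚ) ^ G.card else 0)
      = if F \ R ⊆ H then (-1 : ℚ) ^ F.card else 0 := by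
    intro H hH
    rw [Finset.mem_powersetCard] at hH
    rw [← Finset.sum_filter]
    have : (Finset.Icc R F).filter (H ⊆ ·) = Finset.Icc (R ∪ H) F := by
      ext G
      simp only [Finset.mem_filter, Finset.mem_Icc, Finset.union_subset_iff]
      tauto
    rw [this, ds_sum_Icc _ _ (Finset.union_subset h hH.1)]
    have : R ∪ H = F ↔ F \ R ⊆ H := by
      constructor
      · rintro h v hv
        rw [Finset.mem_sdiff, ← h, Finset.mem_union] at hv
        tauto
      · intro h'
        apply (Finset.union_subset h hH.1).antisymm
        intro v hv
        have := @h' v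
        simp only [Finset.mem_sdiff] at this
        simp only [Finset.mem_union]
        tauto
    simp only [this]
  rw [Finset.sum_congr rfl h2, ← Finset.sum_filter, ← Finset.sum_filter]
  congr 1
  ext H
  simp only [Finset.mem_filter, Finset.mem_powersetCard, Finset.mem_Icc]
  tauto

lemma ds_part {ι : Type*} [DecidableEq ι] (𝓕 Δ : Finset (Finset ι)) (A : Finset ι → Finset ι)
    (hΔ : ∀ G, G ∈ Δ ↔ ∃ F ∈ 𝓕, G ⊆ F)
    (h1 : ∀ G ∈ Δ, ∃! F, F ∈ 𝓕 ∧ A F ⊆ G ∧ G ⊆ F) (g : Finset ι → ℚ) :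
    ∑ G ∈ Δ, g G = ∑ F ∈ 𝓕, ∑ G ∈ Finset.Icc (A F) F, g G := by
  have : ∀ G ∈ Δ, g G = ∑ F ∈ 𝓕.filter (fun F => A F ⊆ G ∧ G ⊆ F), g G := by
    intro G hG
    obtain ⟨F, hF, hu⟩ := h1 G hG
    have : 𝓕.filter (fun F => A F ⊆ G ∧ G ⊆ F) = {F} := by
      ext F'
      simp only [Finset.mem_filter, Finset.mem_singleton]
      constructor
      · exact fun h => hu F' h
      · rintro rfl; exact hF
    rw [this]; simp
  rw [Finset.sum_congr rfl this]
  apply Finset.sum_comm'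
  intro G F
  simp only [Finset.mem_filter, Finset.mem_Icc, hΔ]
  constructor
  · tauto
  · rintro ⟨⟨a, b⟩, c⟩
    exact ⟨⟨F, c, b⟩, c, a, b⟩

lemma ds_comb {ι : Type*} [DecidableEq ι] (n : ℕ) (𝓕 Δ : Finset (Finset ι))
    (hn : ∀ F ∈ 𝓕, F.card = n) (R : Finset ι → Finset ι) (hR : ∀ F, R F ⊆ F)
    (hΔ : ∀ G, G ∈ Δ ↔ ∃ F ∈ 𝓕, G ⊆ F)
    (h1 : ∀ G ∈ Δ, ∃! F, F ∈ 𝓕 ∧ R F ⊆ G ∧ G ⊆ F)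
    (h2 : ∀ G ∈ Δ, ∃! F, F ∈ 𝓕 ∧ F \ R F ⊆ G ∧ G ⊆ F) (m : ℕ) :
    ∑ G ∈ Δ, (-1 : ℚ) ^ G.card * (G.card.choose m : ℚ)
      = (-1) ^ n * ((Δ.filter (fun G => G.card = m)).card : ℚ) := by
  rw [ds_part 𝓕 Δ R hΔ h1]
  have : ∀ F ∈ 𝓕, ∑ G ∈ Finset.Icc (R F) F, (-1 : ℚ) ^ G.card * (G.card.choose m : ℚ)
    = ∑ H ∈ Finset.Icc (F \ R F) F, if H.card = m then (-1 : ℚ) ^ n else 0 := by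
    intro F hF
    rw [ds_local _ _ (hR F), hn F hF]
  rw [Finset.sum_congr rfl this,
    ← ds_part 𝓕 Δ (fun F => F \ R F) hΔ h2 (fun H => if H.card = m then (-1 : ℚ) ^ n else 0),
    ← Finset.sum_filter, Finset.sum_const, nsmul_eq_mul, mul_comm]
section
variable {ι E : Type*} [DecidableEq ι] [AddCommGroup E] [Module ℝ E]

lemma ds_exuniq (u : ι → E) (𝓕 : Finset (Finset ι)) (κ : Finset ι → ι → E →ₗ[ℝ] ℝ)
    (L : Finset ι → E →ₗ[ℝ] ℝ)
    (hκ : ∀ F ∈ 𝓕, ∀ x, x = ∑ v ∈ F, κ F v x • u v)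
    (hκ1 : ∀ F ∈ 𝓕, ∀ v ∈ F, ∀ w ∈ F, κ F v (u w) = if v = w then 1 else 0)
    (hL : ∀ F ∈ 𝓕, ∀ F' ∈ 𝓕, ∀ v ∈ F', L F (u v) ≤ 1)
    (hL1 : ∀ F ∈ 𝓕, ∀ F' ∈ 𝓕, ∀ v ∈ F', L F (u v) = 1 ↔ v ∈ F)
    (hcov : ∀ y, ∃ F ∈ 𝓕, ∀ v ∈ F, 0 ≤ κ F v y)
    (c : E) (hc : ∀ F ∈ 𝓕, ∀ v ∈ F, κ F v c ≠ 0)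
    (G F0 : Finset ι) (hF0 : F0 ∈ 𝓕) (hG : G ⊆ F0) :
    ∃! F, F ∈ 𝓕 ∧ F.filter (fun v => 0 < κ F v c) ⊆ G ∧ G ⊆ F := by
  have hexp : ∀ F ∈ 𝓕, ∀ F', ∀ y, L F' y = ∑ v ∈ F, κ F v y * L F' (u v) := by
    intro F hF F' y
    conv_lhs => rw [hκ F hF y]
    simp
  have hself : ∀ F ∈ 𝓕, ∀ y, L F y = ∑ v ∈ F, κ F v y := by
    intro F hF y
    rw [hexp F hF F y]
    apply Finset.sum_congr rfl
    intro v hv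
    rw [(hL1 F hF F hF v hv).2 hv, mul_one]
  have hdom : ∀ F ∈ 𝓕, ∀ F' ∈ 𝓕, ∀ y, (∀ v ∈ F, 0 ≤ κ F v y) → L F' y ≤ L F y := by
    intro F hF F' hF' y hy
    rw [hexp F hF F' y, hself F hF]
    apply Finset.sum_le_sum
    intro v hv
    have := hL F' hF' F hF v hv
    nlinarith [hy v hv]
  have hsub : ∀ F ∈ 𝓕, ∀ F' ∈ 𝓕, ∀ y, (∀ v ∈ F, 0 < κ F v y) → L F y ≤ L F' y → F ⊆ F' := by
    intro F hF F' hF' y hy hle v hv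
    by_contra hv'
    have hlt : L F' (u v) < 1 :=
      lt_of_le_of_ne (hL F' hF' F hF v hv) (fun h => hv' ((hL1 F' hF' F hF v hv).1 h))
    have : L F' y < L F y := by
      rw [hexp F hF F' y, hself F hF]
      apply Finset.sum_lt_sum
      · intro v hv
        have := hL F' hF' F hF v hv
        nlinarith [hy v hv]
      · exact ⟨v, hv, by nlinarith [hy v hv]⟩
    linarith
  have hu : ∀ F ∈ 𝓕, ∀ N : ℝ, G ⊆ F → ∀ v ∈ F,
      κ F v (N • (∑ w ∈ G, u w) - c) = (if v ∈ G then N else 0) - κ F v c := by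
    intro F hF N hGF v hv
    have : ∑ w ∈ G, κ F v (u w) = if v ∈ G then 1 else 0 := by
      rw [Finset.sum_congr rfl (fun w hw => hκ1 F hF v hv w (hGF hw))]
      simp
    rw [map_sub, map_smul, map_sum, this]
    simp
  have hLG : ∀ F ∈ 𝓕, L F (∑ w ∈ G, u w) ≤ G.card := by
    intro F hF
    rw [map_sum]
    calc _ ≤ ∑ w ∈ G, (1 : ℝ) := Finset.sum_le_sum (fun w hw => hL F hF F0 hF0 w (hG hw))
      _ = _ := by simp
  have hLG0 : ∀ F ∈ 𝓕, (G.card : ℝ) ≤ L F (∑ w ∈ G, u w) → G ⊆ F := by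
    intro F hF h v hv
    by_contra hv'
    have hlt : L F (u v) < 1 :=
      lt_of_le_of_ne (hL F hF F0 hF0 v (hG hv)) (fun h => hv' ((hL1 F hF F0 hF0 v (hG hv)).1 h))
    have : L F (∑ w ∈ G, u w) < G.card := by
      rw [map_sum]
      calc _ < ∑ w ∈ G, (1 : ℝ) := Finset.sum_lt_sum
            (fun w hw => hL F hF F0 hF0 w (hG hw)) ⟨v, hv, hlt⟩
        _ = _ := by simp
    linarith
  have hLF0 : L F0 (∑ w ∈ G, u w) = G.card := by
    rw [map_sum, Finset.sum_congr rfl (fun w hw => (hL1 F0 hF0 F0 hF0 w (hG hw)).2 (hG hw))]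
    simp
  -- choose N
  have hN : ∀ᶠ N : ℝ in Filter.atTop, ∀ F ∈ 𝓕,
      (L F0 (N • (∑ w ∈ G, u w) - c) ≤ L F (N • (∑ w ∈ G, u w) - c) → G ⊆ F) := by
    rw [Filter.eventually_all_finset]
    intro F hF
    by_cases hGF : G ⊆ F
    · simp [hGF]
    · have hlt : L F (∑ w ∈ G, u w) < G.card := by
        by_contra h
        exact hGF (hLG0 F hF (not_lt.1 h))
      filter_upwards [Filter.eventually_gt_atTop
        ((L F0 c - L F c) / (G.card - L F (∑ w ∈ G, u w)))] with N hN h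
      rw [div_lt_iff₀ (by linarith)] at hN
      rw [map_sub, map_sub, map_smul, map_smul, hLF0, smul_eq_mul, smul_eq_mul] at h
      exfalso
      nlinarith
  have hN2 : ∀ᶠ N : ℝ in Filter.atTop, ∀ F ∈ 𝓕, ∀ v ∈ F, κ F v c < N := by
    rw [Filter.eventually_all_finset]
    intro F hF
    rw [Filter.eventually_all_finset]
    intro v hv
    exact Filter.eventually_gt_atTop _
  obtain ⟨N, h1, h2⟩ := (hN.and hN2).exists
  obtain ⟨F, hF, hFy⟩ := hcov (N • (∑ w ∈ G, u w) - c)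
  have hGF : G ⊆ F := h1 F hF (hdom F hF F0 hF0 _ hFy)
  have hpos : ∀ F ∈ 𝓕, F.filter (fun v => 0 < κ F v c) ⊆ G → G ⊆ F →
      ∀ v ∈ F, 0 < κ F v (N • (∑ w ∈ G, u w) - c) := by
    intro F hF hR hGF v hv
    rw [hu F hF N hGF v hv]
    by_cases hvG : v ∈ G
    · simp only [hvG, if_true]
      linarith [h2 F hF v hv]
    · have : ¬ 0 < κ F v c := fun h => hvG (hR (Finset.mem_filter.2 ⟨hv, h⟩))
      have := lt_of_le_of_ne (not_lt.1 this) (hc F hF v hv)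
      simp only [hvG, if_false]
      linarith
  refine ⟨F, ⟨hF, ?_, hGF⟩, ?_⟩
  · intro v hv
    rw [Finset.mem_filter] at hv
    by_contra hvG
    have := hFy v hv.1
    rw [hu F hF N hGF v hv.1] at this
    simp only [hvG, if_false] at this
    linarith
  · rintro F' ⟨hF', hR', hGF'⟩
    have hp' := hpos F' hF' hR' hGF'
    apply (hsub F' hF' F hF _ hp' _).antisymm
    · apply hsub F hF F' hF' (N • (∑ w ∈ G, u w) - c)
      · intro v hv
        apply lt_of_le_of_ne (hFy v hv)
        intro h0
        rw [hu F hF N hGF v hv] at h0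
        by_cases hvG : v ∈ G
        · simp only [hvG, if_true] at h0
          linarith [h2 F hF v hv]
        · simp only [hvG, if_false] at h0
          exact hc F hF v hv (by linarith)
      · exact hdom F' hF' F hF _ (fun v hv => (hp' v hv).le)
    · exact hdom F hF F' hF' _ hFy

end

lemma ds_lin {ι E : Type*} [DecidableEq ι] [AddCommGroup E] [Module ℝ E]
    (n : ℕ) (u : ι → E) (𝓕 Δ : Finset (Finset ι)) (κ : Finset ι → ι → E →ₗ[ℝ] ℝ)
    (L : Finset ι → E →ₗ[ℝ] ℝ)
    (hn : ∀ F ∈ 𝓕, F.card = n)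
    (hΔ : ∀ G, G ∈ Δ ↔ ∃ F ∈ 𝓕, G ⊆ F)
    (hκ : ∀ F ∈ 𝓕, ∀ x, x = ∑ v ∈ F, κ F v x • u v)
    (hκ1 : ∀ F ∈ 𝓕, ∀ v ∈ F, ∀ w ∈ F, κ F v (u w) = if v = w then 1 else 0)
    (hL : ∀ F ∈ 𝓕, ∀ F' ∈ 𝓕, ∀ v ∈ F', L F (u v) ≤ 1)
    (hL1 : ∀ F ∈ 𝓕, ∀ F' ∈ 𝓕, ∀ v ∈ F', L F (u v) = 1 ↔ v ∈ F)
    (hcov : ∀ y, ∃ F ∈ 𝓕, ∀ v ∈ F, 0 ≤ κ F v y) (m : ℕ) :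
    ∑ G ∈ Δ, (-1 : ℚ) ^ G.card * (G.card.choose m : ℚ)
      = (-1) ^ n * ((Δ.filter (fun G => G.card = m)).card : ℚ) := by
  obtain ⟨c, hc⟩ : ∃ c : E, ∀ F ∈ 𝓕, ∀ v ∈ F, κ F v c ≠ 0 := by
    obtain ⟨c, hc⟩ := Module.Dual.exists_forall_ne_zero_of_forall_exists
      (K := ℝ) (M := E) (ι := Σ F : 𝓕, (F : Finset ι))
      (fun i => κ i.1 i.2) (fun i => ⟨u i.2, by
        rw [hκ1 i.1 i.1.2 i.2 i.2.2 i.2 i.2.2]; simp⟩)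
    exact ⟨c, fun F hF v hv => hc ⟨⟨F, hF⟩, ⟨v, hv⟩⟩⟩
  apply ds_comb n 𝓕 Δ hn (fun F => F.filter (fun v => 0 < κ F v c))
    (fun F => Finset.filter_subset _ _) hΔ
  · intro G hG
    obtain ⟨F0, hF0, hG0⟩ := (hΔ G).1 hG
    exact ds_exuniq u 𝓕 κ L hκ hκ1 hL hL1 hcov c hc G F0 hF0 hG0
  · intro G hG
    obtain ⟨F0, hF0, hG0⟩ := (hΔ G).1 hG
    have := ds_exuniq u 𝓕 κ L hκ hκ1 hL hL1 hcov (-c)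
      (fun F hF v hv => by simpa using hc F hF v hv) G F0 hF0 hG0
    have key : ∀ F ∈ 𝓕, F \ F.filter (fun v => 0 < κ F v c)
        = F.filter (fun v => 0 < κ F v (-c)) := by
      intro F hF
      ext v
      simp only [Finset.mem_sdiff, Finset.mem_filter, map_neg, not_and, not_lt]
      constructor
      · rintro ⟨h, h'⟩
        have := lt_of_le_of_ne (h' h) (hc F hF v h)
        exact ⟨h, by linarith⟩
      · rintro ⟨h, h'⟩
        exact ⟨h, fun _ => by linarith⟩
    obtain ⟨F, ⟨a, b, d⟩, hu⟩ := this
    refine ⟨F, ⟨a, ?_, d⟩, ?_⟩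
    · rw [key F a]; exact b
    · rintro F' ⟨a', b', d'⟩
      apply hu F'
      rw [key F' a'] at b'
      exact ⟨a', b', d'⟩

lemma ds_hull_le {n : ℕ} (V : Set (EuclideanSpace ℝ (Fin n)))
    (l : EuclideanSpace ℝ (Fin n) →ₗ[ℝ] ℝ) (a : ℝ) (h : ∀ w ∈ V, l w ≤ a) :
    ∀ x ∈ convexHull ℝ V, l x ≤ a := by
  intro x hx
  have : convexHull ℝ V ⊆ {x | l x ≤ a} :=
    convexHull_min (fun w hw => h w hw) (convex_halfSpace_le l.isLinear a)
  exact this hx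

lemma ds_int_lt {n : ℕ} (S : Set (EuclideanSpace ℝ (Fin n)))
    (l : EuclideanSpace ℝ (Fin n) →ₗ[ℝ] ℝ) (a : ℝ) (h : ∀ w ∈ S, l w ≤ a) (hl : l ≠ 0)
    (z) (hz : z ∈ interior S) : l z < a := by
  obtain ⟨d, hd⟩ : ∃ d, 0 < l d := by
    by_contra hcon
    push Not at hcon
    apply hl
    ext d
    have h1 := hcon d
    have h2 := hcon (-d)
    rw [map_neg] at h2
    simp only [LinearMap.zero_apply]
    linarith
  have hcont : Continuous (fun t : ℝ => z + t • d) := by fun_prop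
  have hmem : ∀ᶠ t : ℝ in nhds 0, z + t • d ∈ interior S := by
    apply hcont.continuousAt.eventually_mem
    simpa using isOpen_interior.mem_nhds hz
  obtain ⟨t, ht, ht0⟩ := ((hmem.filter_mono nhdsWithin_le_nhds).and
    (self_mem_nhdsWithin : ∀ᶠ t : ℝ in nhdsWithin 0 (Set.Ioi 0), t ∈ Set.Ioi (0 : ℝ))).exists
  have := h _ (interior_subset ht)
  rw [map_add, map_smul, smul_eq_mul] at this
  have ht0 : 0 < t := ht0
  nlinarith

lemma ds_facet {n : ℕ} (V : Finset (EuclideanSpace ℝ (Fin n)))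
    (hV : (interior (convexHull ℝ (V : Set (EuclideanSpace ℝ (Fin n))))).Nonempty) (d : ℕ) :
    ∀ (l : EuclideanSpace ℝ (Fin n) →ₗ[ℝ] ℝ) (a : ℝ), l ≠ 0 →
    (∀ x ∈ convexHull ℝ (V : Set (EuclideanSpace ℝ (Fin n))), l x ≤ a) →
    (∃ x ∈ convexHull ℝ (V : Set (EuclideanSpace ℝ (Fin n))), l x = a) →
    n - sdim {x ∈ convexHull ℝ (V : Set (EuclideanSpace ℝ (Fin n))) | l x = a} ≤ d →
    ∃ (l' : EuclideanSpace ℝ (Fin n) →ₗ[ℝ] ℝ) (a' : ℝ), l' ≠ 0 ∧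
      (∀ x ∈ convexHull ℝ (V : Set (EuclideanSpace ℝ (Fin n))), l' x ≤ a') ∧
      {x ∈ convexHull ℝ (V : Set (EuclideanSpace ℝ (Fin n))) | l x = a} ⊆
        {x ∈ convexHull ℝ (V : Set (EuclideanSpace ℝ (Fin n))) | l' x = a'} ∧
      sdim {x ∈ convexHull ℝ (V : Set (EuclideanSpace ℝ (Fin n))) | l' x = a'} = n - 1 := by
  set P := convexHull ℝ (V : Set (EuclideanSpace ℝ (Fin n))) with hP
  obtain ⟨z, hz⟩ := hV
  have hVP : ∀ w ∈ V, w ∈ P := fun w hw => subset_convexHull ℝ _ hw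
  have hvs : ∀ (l : EuclideanSpace ℝ (Fin n) →ₗ[ℝ] ℝ) (a : ℝ),
      vectorSpan ℝ {x ∈ P | l x = a} ≤ LinearMap.ker l := by
    intro l a
    rw [vectorSpan_def, Submodule.span_le]
    rintro _ ⟨x, hx, y, hy, rfl⟩
    simp [hx.2, hy.2]
  have hker : ∀ (l : EuclideanSpace ℝ (Fin n) →ₗ[ℝ] ℝ), l ≠ 0 →
      Module.finrank ℝ (LinearMap.ker l) + 1 = n := by
    intro l hl
    have := Module.Dual.finrank_ker_add_one_of_ne_zero (f := l) hl
    simpa using this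
  induction d with
  | zero =>
    intro l a hl hle hx hd
    have h1 := Submodule.finrank_mono (hvs l a)
    have h2 := hker l hl
    unfold sdim at hd
    omega
  | succ d ih =>
    intro l a hl hle hx hd
    obtain ⟨x0, hx0, hx0a⟩ := hx
    by_cases hdim : sdim {x ∈ P | l x = a} = n - 1
    · exact ⟨l, a, hl, hle, subset_rfl, hdim⟩
    have h1 := Submodule.finrank_mono (hvs l a)
    have h2 := hker l hl
    have hlt : vectorSpan ℝ {x ∈ P | l x = a} < LinearMap.ker l := by
      apply lt_of_le_of_ne (hvs l a)
      intro h
      apply hdim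
      unfold sdim
      rw [h]
      omega
    obtain ⟨e, he, heW⟩ := SetLike.exists_of_lt hlt
    obtain ⟨m0, hm0, hm0W⟩ := Submodule.exists_le_ker_of_notMem heW
    have hwlog : ∃ m : EuclideanSpace ℝ (Fin n) →ₗ[ℝ] ℝ, m e ≠ 0 ∧
        vectorSpan ℝ {x ∈ P | l x = a} ≤ LinearMap.ker m ∧ ∃ w ∈ V, m x0 < m w := by
      by_contra hcon
      push Not at hcon
      have c1 := hcon m0 hm0 hm0W
      have c2 := hcon (-m0) (by simpa using hm0) (by
        intro x hx
        have := hm0W hx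
        simpa using this)
      have hm00 : m0 ≠ 0 := by rintro rfl; simp at hm0
      have d1 := ds_hull_le V m0 (m0 x0) c1
      have d2 := ds_hull_le V (-m0) ((-m0) x0) c2
      have d3 := ds_int_lt P m0 (m0 x0) d1 hm00 z hz
      have d4 := d2 z (interior_subset hz)
      simp only [LinearMap.neg_apply] at d4
      linarith
    obtain ⟨m, hme, hmW, w1, hw1, hw1m⟩ := hwlog
    have hmH : ∀ x ∈ {x ∈ P | l x = a}, m x = m x0 := by
      intro x hx
      have : x -ᵥ x0 ∈ vectorSpan ℝ {x ∈ P | l x = a} := vsub_mem_vectorSpan ℝ hx ⟨hx0, hx0a⟩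
      have := hmW this
      simp only [vsub_eq_sub, LinearMap.mem_ker, map_sub] at this
      linarith
    obtain ⟨w0, hw0, hmin⟩ := Finset.exists_min_image (V.filter (fun w => m x0 < m w))
      (fun w => (a - l w) / (m w - m x0)) ⟨w1, Finset.mem_filter.2 ⟨hw1, hw1m⟩⟩
    rw [Finset.mem_filter] at hw0
    have hw0P := hVP w0 hw0.1
    have hw0lt : l w0 < a := by
      apply lt_of_le_of_ne (hle w0 hw0P)
      intro h
      have := hmH w0 ⟨hw0P, h⟩
      linarith [hw0.2]
    set t := (a - l w0) / (m w0 - m x0) with ht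
    have htpos : 0 < t := div_pos (by linarith) (by linarith [hw0.2])
    have htw0 : t * (m w0 - m x0) = a - l w0 := by
      rw [ht]; exact div_mul_cancel₀ _ (by linarith [hw0.2])
    have hne : l + t • m ≠ 0 := by
      intro h
      have := congrArg (fun f => f e) h
      simp only [LinearMap.add_apply, LinearMap.smul_apply, LinearMap.zero_apply,
        LinearMap.mem_ker.1 he, zero_add, smul_eq_mul] at this
      exact (mul_ne_zero htpos.ne' hme) this
    have hle' : ∀ x ∈ P, (l + t • m) x ≤ a + t * m x0 := by
      apply ds_hull_le
      intro w hw
      simp only [LinearMap.add_apply, LinearMap.smul_apply, smul_eq_mul]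
      by_cases hmw : m x0 < m w
      · have := hmin w (Finset.mem_filter.2 ⟨hw, hmw⟩)
        rw [le_div_iff₀ (by linarith)] at this
        linarith
      · have := hle w (hVP w hw)
        nlinarith
    have hsub : {x ∈ P | l x = a} ⊆ {x ∈ P | (l + t • m) x = a + t * m x0} := by
      intro x hx
      refine ⟨hx.1, ?_⟩
      simp only [LinearMap.add_apply, LinearMap.smul_apply, smul_eq_mul]
      rw [hmH x hx, hx.2]
    have hw0' : w0 ∈ {x ∈ P | (l + t • m) x = a + t * m x0} := by
      refine ⟨hw0P, ?_⟩
      simp only [LinearMap.add_apply, LinearMap.smul_apply, smul_eq_mul]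
      linarith
    have hlt2 : vectorSpan ℝ {x ∈ P | l x = a} <
        vectorSpan ℝ {x ∈ P | (l + t • m) x = a + t * m x0} := by
      apply lt_of_le_of_ne (vectorSpan_mono ℝ hsub)
      intro h
      have h3 : w0 -ᵥ x0 ∈ vectorSpan ℝ {x ∈ P | (l + t • m) x = a + t * m x0} :=
        vsub_mem_vectorSpan ℝ hw0' (hsub ⟨hx0, hx0a⟩)
      rw [← h] at h3
      have := hmW h3
      simp only [vsub_eq_sub, LinearMap.mem_ker, map_sub] at this
      linarith [hw0.2]
    have hfr := Submodule.finrank_lt_finrank_of_lt hlt2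
    obtain ⟨l', a', r1, r2, r3, r4⟩ := ih (l + t • m) (a + t * m x0) hne hle'
      ⟨x0, hx0, (hsub ⟨hx0, hx0a⟩).2⟩ (by unfold sdim at hd ⊢; omega)
    exact ⟨l', a', r1, r2, hsub.trans r3, r4⟩

lemma ds_kappa {n : ℕ} (s : Finset (EuclideanSpace ℝ (Fin n))) (hcard : s.card = n)
    (hs : AffineIndependent ℝ (fun v : s => (v : EuclideanSpace ℝ (Fin n))))
    (l : EuclideanSpace ℝ (Fin n) →ₗ[ℝ] ℝ) (a : ℝ) (hl : ∀ v ∈ s, l v = a)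
    (z : EuclideanSpace ℝ (Fin n)) (hz : l z < a) :
    ∃ κ : EuclideanSpace ℝ (Fin n) → EuclideanSpace ℝ (Fin n) →ₗ[ℝ] ℝ,
      (∀ x, x = ∑ v ∈ s, κ v x • (v - z)) ∧
      (∀ v ∈ s, ∀ w ∈ s, κ v (w - z) = if v = w then 1 else 0) := by
  classical
  have hli : LinearIndependent ℝ (fun v : s => (v : EuclideanSpace ℝ (Fin n)) - z) := by
    rw [Fintype.linearIndependent_iff]
    intro g hg
    have h1 : ∑ v : s, g v = 0 := by
      have := congrArg l hg
      rw [map_sum, map_zero] at this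
      have h2 : ∀ v ∈ (Finset.univ : Finset s), l (g v • ((v : EuclideanSpace ℝ (Fin n)) - z))
          = g v * (a - l z) := by
        intro v _
        rw [map_smul, map_sub, hl v v.2, smul_eq_mul]
      rw [Finset.sum_congr rfl h2, ← Finset.sum_mul] at this
      exact (mul_eq_zero.1 this).resolve_right (by linarith)
    have h3 : ∑ v : s, g v • (v : EuclideanSpace ℝ (Fin n)) = 0 := by
      simp only [smul_sub, Finset.sum_sub_distrib, ← Finset.sum_smul, h1, zero_smul, sub_zero] at hg
      exact hg
    intro i
    exact (affineIndependent_iff.1 hs) Finset.univ g h1 h3 i (Finset.mem_univ i)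
  have hc : Fintype.card s = Module.finrank ℝ (EuclideanSpace ℝ (Fin n)) := by
    simp [hcard]
  let b := Module.Basis.mk hli (hli.span_eq_top_of_card_eq_finrank' hc).ge
  have hb : ∀ v : s, b v = (v : EuclideanSpace ℝ (Fin n)) - z := fun v => by simp [b]
  refine ⟨fun v => if h : v ∈ s then b.coord ⟨v, h⟩ else 0, ?_, ?_⟩
  · intro x
    conv_lhs => rw [← b.sum_repr x]
    rw [← Finset.sum_coe_sort s]
    apply Finset.sum_congr rfl
    intro v _
    simp [hb]
  · intro v hv w hw
    have := b.repr_self ⟨w, hw⟩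
    rw [hb] at this
    simp only [hv, dif_pos, Module.Basis.coord_apply]
    simp only at this
    rw [this, Finsupp.single_apply]
    simp [Subtype.ext_iff, eq_comm]

/-- `s` is the vertex set of a simplex facet. -/
def DsFct {n : ℕ} (P : ConvexPolytope n) (s : Finset (EuclideanSpace ℝ (Fin n))) : Prop :=
  s.card = n ∧ AffineIndependent ℝ (fun v : s => (v : EuclideanSpace ℝ (Fin n))) ∧
  ∃ (l : EuclideanSpace ℝ (Fin n) →ₗ[ℝ] ℝ) (a : ℝ), l ≠ 0 ∧ (∀ x ∈ P.carrier, l x ≤ a) ∧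
    convexHull ℝ (s : Set (EuclideanSpace ℝ (Fin n))) = {x ∈ P.carrier | l x = a}

lemma ds_exposed_of {n : ℕ} (S : Set (EuclideanSpace ℝ (Fin n)))
    (l : EuclideanSpace ℝ (Fin n) →ₗ[ℝ] ℝ) (a : ℝ) (h : ∀ x ∈ S, l x ≤ a) :
    IsExposed ℝ S {x ∈ S | l x = a} := by
  rintro ⟨x0, hx0, hx0a⟩
  refine ⟨LinearMap.toContinuousLinearMap l, ?_⟩
  ext x
  simp only [Set.mem_ofPred_eq, LinearMap.coe_toContinuousLinearMap']
  constructor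
  · rintro ⟨h1, h2⟩
    exact ⟨h1, fun y hy => h2 ▸ h y hy⟩
  · rintro ⟨h1, h2⟩
    exact ⟨h1, le_antisymm (h x h1) (hx0a ▸ h2 x0 hx0)⟩

lemma ds_of_exposed {n : ℕ} (S H : Set (EuclideanSpace ℝ (Fin n)))
    (h : IsExposed ℝ S H) (hne : H.Nonempty) :
    ∃ (l : EuclideanSpace ℝ (Fin n) →ₗ[ℝ] ℝ) (a : ℝ), (∀ x ∈ S, l x ≤ a) ∧
      H = {x ∈ S | l x = a} := by
  obtain ⟨l, hl⟩ := h hne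
  obtain ⟨x0, hx0⟩ := hne
  rw [hl] at hx0
  refine ⟨l.toLinearMap, l x0, hx0.2, ?_⟩
  rw [hl]
  ext x
  simp only [Set.mem_ofPred_eq, ContinuousLinearMap.coe_coe]
  constructor
  · rintro ⟨h1, h2⟩
    exact ⟨h1, le_antisymm (hx0.2 x h1) (h2 x0 hx0.1)⟩
  · rintro ⟨h1, h2⟩
    exact ⟨h1, fun y hy => h2 ▸ hx0.2 y hy⟩

lemma ds_sdim_carrier {n : ℕ} (P : ConvexPolytope n) : sdim P.carrier = n := by
  have h : vectorSpan ℝ P.carrier = ⊤ := by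
    have h1 := affineSpan_eq_top_of_nonempty_interior P.nonempty_int
    unfold ConvexPolytope.carrier
    rw [← direction_affineSpan, affineSpan_convexHull, h1, AffineSubspace.direction_top]
  unfold sdim
  rw [h]
  simp

lemma ds_exists_fct {n : ℕ} (P : ConvexPolytope n) (hs : P.IsSimplicial)
    (l : EuclideanSpace ℝ (Fin n) →ₗ[ℝ] ℝ) (a : ℝ) (hl : l ≠ 0)
    (h : ∀ x ∈ P.carrier, l x ≤ a) (hx : ∃ x ∈ P.carrier, l x = a) :
    ∃ s, DsFct P s ∧ {x ∈ P.carrier | l x = a} ⊆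
      convexHull ℝ (s : Set (EuclideanSpace ℝ (Fin n))) := by
  obtain ⟨l', a', h1, h2, h3, h4⟩ := ds_facet P.verts P.nonempty_int n l a hl h hx (by omega)
  obtain ⟨x, hx, hxa⟩ := hx
  obtain ⟨s, c1, c2, c3⟩ := hs {x ∈ P.carrier | l' x = a'}
    ⟨ds_exposed_of _ l' a' h2, ⟨x, h3 ⟨hx, hxa⟩⟩, h4⟩
  exact ⟨s, ⟨c1, c2, l', a', h1, h2, c3.symm⟩, c3 ▸ h3⟩

lemma ds_face_simplex {n : ℕ} (S : Set (EuclideanSpace ℝ (Fin n))) (hS : Convex ℝ S)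
    (s : Finset (EuclideanSpace ℝ (Fin n))) (hsS : ∀ v ∈ s, v ∈ S)
    (l : EuclideanSpace ℝ (Fin n) →ₗ[ℝ] ℝ) (a : ℝ) (h : ∀ x ∈ S, l x ≤ a)
    (hsub : {x ∈ S | l x = a} ⊆ convexHull ℝ (s : Set (EuclideanSpace ℝ (Fin n)))) :
    {x ∈ S | l x = a} = convexHull ℝ
      ((s.filter (fun v => l v = a) : Finset _) : Set (EuclideanSpace ℝ (Fin n))) := by
  apply Set.Subset.antisymm
  · intro x hx
    obtain ⟨w, hw0, hw1, hwx⟩ := Finset.mem_convexHull'.1 (hsub hx)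
    have hsum : ∑ v ∈ s, w v * (a - l v) = 0 := by
      have := congrArg l hwx
      rw [map_sum, hx.2] at this
      simp only [map_smul, smul_eq_mul] at this
      simp only [mul_sub, Finset.sum_sub_distrib, ← Finset.sum_mul, hw1, this]
      ring
    have hz := (Finset.sum_eq_zero_iff_of_nonneg (fun v hv =>
      mul_nonneg (hw0 v hv) (sub_nonneg.2 (h v (hsS v hv))))).1 hsum
    have hz' : ∀ v ∈ s, l v ≠ a → w v = 0 := by
      intro v hv hne
      rcases mul_eq_zero.1 (hz v hv) with h | h
      · exact h
      · exact absurd (by linarith) hne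
    rw [Finset.mem_convexHull']
    refine ⟨w, fun v hv => hw0 v (Finset.mem_filter.1 hv).1, ?_, ?_⟩
    · rw [Finset.sum_filter_of_ne, hw1]
      intro v hv hne
      by_contra hc
      exact hne (hz' v hv hc)
    · rw [Finset.sum_filter_of_ne, hwx]
      intro v hv hne
      by_contra hc
      exact hne (by rw [hz' v hv hc, zero_smul])
  · apply convexHull_min
    · intro v hv
      have := Finset.mem_filter.1 (Finset.mem_coe.1 hv)
      exact ⟨hsS v this.1, this.2⟩
    · have : {x ∈ S | l x = a} = S ∩ {x | l x = a} := rfl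
      rw [this]
      exact hS.inter (convex_hyperplane l.isLinear a)

lemma ds_fct_mem {n : ℕ} (P : ConvexPolytope n) (s : Finset (EuclideanSpace ℝ (Fin n)))
    (l : EuclideanSpace ℝ (Fin n) →ₗ[ℝ] ℝ) (a : ℝ)
    (hF : convexHull ℝ (s : Set (EuclideanSpace ℝ (Fin n))) = {x ∈ P.carrier | l x = a}) :
    ∀ v ∈ s, v ∈ P.carrier ∧ l v = a := by
  intro v hv
  have : v ∈ convexHull ℝ (s : Set (EuclideanSpace ℝ (Fin n))) := subset_convexHull ℝ _ hv
  rw [hF] at this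
  exact this

lemma ds_sub_exposed {n : ℕ} (P : ConvexPolytope n) (s : Finset (EuclideanSpace ℝ (Fin n)))
    (hs : DsFct P s) (G : Finset (EuclideanSpace ℝ (Fin n))) (hG : G ⊆ s) :
    IsExposed ℝ P.carrier (convexHull ℝ (G : Set (EuclideanSpace ℝ (Fin n)))) := by
  classical
  obtain ⟨hcard, haff, l, a, hl, hle, hF⟩ := hs
  obtain ⟨z, hz⟩ := P.nonempty_int
  have hlz := ds_int_lt _ l a hle hl z hz
  have hmem := ds_fct_mem P s l a hF
  obtain ⟨κ, hκ, hκ1⟩ := ds_kappa s hcard haff l a (fun v hv => (hmem v hv).2) z hlz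
  set m : EuclideanSpace ℝ (Fin n) →ₗ[ℝ] ℝ := ∑ v ∈ s \ G, κ v with hm
  have hms : ∀ w ∈ s, m (w - z) = if w ∈ G then 0 else 1 := by
    intro w hw
    rw [hm, LinearMap.sum_apply, Finset.sum_congr rfl
      (fun v hv => hκ1 v (Finset.mem_sdiff.1 hv).1 w hw)]
    simp [hw]
  have hm0 : ∀ x ∈ P.carrier, l x = a → m z ≤ m x := by
    intro x hx hxa
    have hx' : x ∈ convexHull ℝ (s : Set (EuclideanSpace ℝ (Fin n))) := by
      rw [hF]; exact ⟨hx, hxa⟩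
    have := ds_hull_le s (-m) (-m z) (by
      intro w hw
      have := hms w hw
      rw [map_sub] at this
      simp only [LinearMap.neg_apply]
      split_ifs at this <;> linarith) x hx'
    simp only [LinearMap.neg_apply] at this
    linarith
  obtain ⟨ε, hε, hε0⟩ : ∃ ε : ℝ, (∀ w ∈ P.verts, ε * (m z - m w) ≤ (a - l w) / 2) ∧ 0 < ε := by
    have h1 : ∀ᶠ ε : ℝ in nhdsWithin 0 (Set.Ioi 0),
        ∀ w ∈ P.verts, ε * (m z - m w) ≤ (a - l w) / 2 := by
      rw [Filter.eventually_all_finset]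
      intro w hw
      have hwP : w ∈ P.carrier := subset_convexHull ℝ _ hw
      rcases (hle w hwP).lt_or_eq with h | h
      · have hcont : Continuous (fun ε : ℝ => ε * (m z - m w)) := by fun_prop
        have : ∀ᶠ ε : ℝ in nhds 0, ε * (m z - m w) < (a - l w) / 2 :=
          hcont.continuousAt.eventually_lt continuousAt_const (by simp; linarith)
        exact (this.filter_mono nhdsWithin_le_nhds).mono fun _ h => h.le
      · filter_upwards [self_mem_nhdsWithin] with ε hε
        have hε : 0 < ε := hε
        have := hm0 w hwP h
        rw [h]
        nlinarith
    exact (h1.and (self_mem_nhdsWithin : ∀ᶠ t : ℝ in nhdsWithin 0 (Set.Ioi 0), t ∈ Set.Ioi (0 : ℝ))).exists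
  have hεP : ∀ x ∈ P.carrier, ε * (m z - m x) ≤ (a - l x) / 2 := by
    intro x hx
    have := ds_hull_le P.verts ((1 / 2 : ℝ) • l - ε • m) (a / 2 - ε * m z) (by
      intro w hw
      have := hε w hw
      simp only [LinearMap.sub_apply, LinearMap.smul_apply, smul_eq_mul]
      linarith) x hx
    simp only [LinearMap.sub_apply, LinearMap.smul_apply, smul_eq_mul] at this
    linarith
  have hle' : ∀ x ∈ P.carrier, (l - ε • m) x ≤ a - ε * m z := by
    intro x hx
    have h1 := hεP x hx
    have h2 := hle x hx
    simp only [LinearMap.sub_apply, LinearMap.smul_apply, smul_eq_mul]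
    linarith
  have hsub : {x ∈ P.carrier | (l - ε • m) x = a - ε * m z} ⊆
      convexHull ℝ (s : Set (EuclideanSpace ℝ (Fin n))) := by
    rintro x ⟨hx, hxa⟩
    rw [hF]
    refine ⟨hx, ?_⟩
    have h1 := hεP x hx
    have h2 := hle x hx
    simp only [LinearMap.sub_apply, LinearMap.smul_apply, smul_eq_mul] at hxa
    linarith
  have key := ds_face_simplex P.carrier (convex_convexHull ℝ _) s (fun v hv => (hmem v hv).1)
    (l - ε • m) (a - ε * m z) hle' hsub
  have hfil : s.filter (fun v => (l - ε • m) v = a - ε * m z) = G := by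
    ext v
    rw [Finset.mem_filter]
    simp only [LinearMap.sub_apply, LinearMap.smul_apply, smul_eq_mul]
    constructor
    · rintro ⟨hv, h⟩
      by_contra hvG
      have h1 := hms v hv
      rw [map_sub, if_neg hvG] at h1
      rw [(hmem v hv).2] at h
      nlinarith
    · intro hvG
      have hv := hG hvG
      have h1 := hms v hv
      rw [map_sub, if_pos hvG] at h1
      refine ⟨hv, ?_⟩
      rw [(hmem v hv).2]
      have : m v = m z := by linarith
      rw [this]
  rw [hfil] at key
  rw [← key]
  exact ds_exposed_of _ _ _ hle'

lemma ds_fct_extreme {n : ℕ} (P : ConvexPolytope n) (s : Finset (EuclideanSpace ℝ (Fin n)))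
    (hs : DsFct P s) : ∀ v ∈ s, v ∈ P.carrier.extremePoints ℝ := by
  intro v hv
  have h := ds_sub_exposed P s hs {v} (by simpa using hv)
  rw [Finset.coe_singleton, convexHull_singleton] at h
  exact isExtreme_singleton.1 h.isExtreme

lemma ds_extreme_mem {n : ℕ} (P : ConvexPolytope n) (s : Finset (EuclideanSpace ℝ (Fin n)))
    (hs : ∀ v ∈ s, v ∈ P.carrier) (v) (hv : v ∈ P.carrier.extremePoints ℝ)
    (hvs : v ∈ convexHull ℝ (s : Set (EuclideanSpace ℝ (Fin n)))) : v ∈ s := by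
  have hsub : convexHull ℝ (s : Set (EuclideanSpace ℝ (Fin n))) ⊆ P.carrier :=
    convexHull_min hs (convex_convexHull ℝ _)
  have := inter_extremePoints_subset_extremePoints_of_subset hsub ⟨hvs, hv⟩
  exact extremePoints_convexHull_subset this

lemma ds_cover {n : ℕ} (hn : 1 ≤ n) (P : ConvexPolytope n) (hs : P.IsSimplicial)
    (z) (hz : z ∈ interior P.carrier) (y : EuclideanSpace ℝ (Fin n)) :
    ∃ s, DsFct P s ∧ ∃ w : EuclideanSpace ℝ (Fin n) → ℝ, (∀ v ∈ s, 0 ≤ w v) ∧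
      y = ∑ v ∈ s, w v • (v - z) := by
  have hcpt : IsCompact P.carrier := P.verts.finite_toSet.isCompact_convexHull ℝ
  have hconv : Convex ℝ P.carrier := convex_convexHull ℝ _
  by_cases hy : y = 0
  · have : ∃ l : EuclideanSpace ℝ (Fin n) →ₗ[ℝ] ℝ, l ≠ 0 := by
      have : Nontrivial (EuclideanSpace ℝ (Fin n)) := by
        apply Module.nontrivial_of_finrank_pos (R := ℝ)
        simp; omega
      exact exists_ne (0 : Module.Dual ℝ (EuclideanSpace ℝ (Fin n)))
    obtain ⟨l, hl⟩ := this
    obtain ⟨x, hx, hmax⟩ := hcpt.exists_isMaxOn ⟨z, interior_subset hz⟩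
      (l.continuous_of_finiteDimensional.continuousOn)
    obtain ⟨s, hs1, -⟩ := ds_exists_fct P hs l (l x) hl hmax ⟨x, hx, rfl⟩
    exact ⟨s, hs1, 0, by simp, by simp [hy]⟩
  · have hcont : Continuous (fun t : ℝ => z + t • y) := by fun_prop
    -- the set of parameters
    obtain ⟨C, hC⟩ := hcpt.isBounded.exists_norm_le
    set T : Set ℝ := Set.Ici 0 ∩ (fun t : ℝ => z + t • y) ⁻¹' P.carrier with hT
    have hTc : IsCompact T := by
      apply Metric.isCompact_of_isClosed_isBounded
      · exact isClosed_Ici.inter (hcpt.isClosed.preimage hcont)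
      · rw [isBounded_iff_forall_norm_le]
        refine ⟨(C + ‖z‖) / ‖y‖, ?_⟩
        rintro t ⟨_, ht⟩
        have h1 := hC _ ht
        rw [le_div_iff₀ (norm_pos_iff.2 hy), ← norm_smul]
        have : t • y = (z + t • y) - z := by abel
        rw [this]
        exact (norm_sub_le _ _).trans (by linarith)
    obtain ⟨t0, ht0, htmax⟩ := hTc.exists_isMaxOn ⟨0, by simp [hT, interior_subset hz]⟩
      continuousOn_id
    have hnot : ∀ t, t ∈ T → z + t • y ∈ interior P.carrier → ∃ t', t < t' ∧ t' ∈ T := by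
      intro t ht hint
      have hmem : ∀ᶠ r : ℝ in nhds t, z + r • y ∈ interior P.carrier :=
        hcont.continuousAt.eventually_mem (isOpen_interior.mem_nhds hint)
      obtain ⟨r, hr, hr0⟩ := ((hmem.filter_mono nhdsWithin_le_nhds).and
        (self_mem_nhdsWithin : ∀ᶠ r : ℝ in nhdsWithin t (Set.Ioi t), r ∈ Set.Ioi t)).exists
      have hr0 : t < r := hr0
      have h0 : 0 ≤ t := ht.1
      exact ⟨r, hr0, h0.trans hr0.le, (interior_subset hr : z + r • y ∈ P.carrier)⟩
    have ht0pos : 0 < t0 := by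
      obtain ⟨t', h1, h2⟩ := hnot 0 (by simp [hT, interior_subset hz]) (by simpa using hz)
      have : t' ≤ t0 := htmax h2
      linarith
    have hbint : z + t0 • y ∉ interior P.carrier := by
      intro h
      obtain ⟨t', h1, h2⟩ := hnot t0 ht0 h
      have : t' ≤ t0 := htmax h2
      linarith
    obtain ⟨l, hl⟩ := geometric_hahn_banach_open_point hconv.interior isOpen_interior hbint
    have hle : ∀ x ∈ P.carrier, l.toLinearMap x ≤ l (z + t0 • y) := by
      intro x hx
      have hx' : x ∈ closure (interior P.carrier) := by
        rw [hconv.closure_interior_eq_closure_of_nonempty_interior ⟨z, hz⟩]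
        exact subset_closure hx
      have : closure (interior P.carrier) ⊆ {x | l x ≤ l (z + t0 • y)} :=
        closure_minimal (fun a ha => (hl a ha).le) (isClosed_le l.continuous continuous_const)
      exact this hx'
    have hl0 : l.toLinearMap ≠ 0 := by
      intro h
      have h1 := hl z hz
      have h2 : ∀ x, l x = 0 := fun x => congrArg (fun f => f x) h
      rw [h2, h2] at h1
      exact lt_irrefl _ h1
    obtain ⟨s, hs1, hs2⟩ := ds_exists_fct P hs l.toLinearMap _ hl0 hle ⟨_, ht0.2, rfl⟩
    have hb := hs2 ⟨ht0.2, rfl⟩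
    obtain ⟨w, hw0, hw1, hwx⟩ := Finset.mem_convexHull'.1 hb
    refine ⟨s, hs1, fun v => t0⁻¹ * w v, fun v hv => mul_nonneg (inv_nonneg.2 ht0pos.le) (hw0 v hv), ?_⟩
    simp only [mul_smul, ← Finset.smul_sum, smul_sub, Finset.sum_sub_distrib, hwx, ← Finset.sum_smul, hw1]
    rw [one_smul, add_comm z, smul_add, ← mul_smul, inv_mul_cancel₀ ht0pos.ne', one_smul]
    abel

lemma ds_L {n : ℕ} (P : ConvexPolytope n) (s : Finset (EuclideanSpace ℝ (Fin n)))
    (hs : DsFct P s) (z) (hz : z ∈ interior P.carrier) :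
    ∃ L : EuclideanSpace ℝ (Fin n) →ₗ[ℝ] ℝ, (∀ x ∈ P.carrier, L (x - z) ≤ 1) ∧
      (∀ x ∈ P.carrier, L (x - z) = 1 ↔
        x ∈ convexHull ℝ (s : Set (EuclideanSpace ℝ (Fin n)))) := by
  obtain ⟨hcard, haff, l, a, hl, hle, hF⟩ := hs
  have hlz := ds_int_lt _ l a hle hl z hz
  have hpos : 0 < a - l z := by linarith
  refine ⟨(a - l z)⁻¹ • l, ?_, ?_⟩
  · intro x hx
    have := hle x hx
    rw [LinearMap.smul_apply, smul_eq_mul, map_sub, inv_mul_le_iff₀ hpos]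
    linarith
  · intro x hx
    rw [hF, LinearMap.smul_apply, smul_eq_mul, map_sub, inv_mul_eq_one₀ hpos.ne']
    constructor
    · intro h
      exact ⟨hx, by linarith⟩
    · rintro ⟨-, h⟩
      linarith

lemma ds_main {n : ℕ} (hn : 1 ≤ n) (P : ConvexPolytope n) (hs : P.IsSimplicial) :
    ∃ N : ℕ → ℕ, N 0 = 1 ∧ (∀ j, j < n → P.fcount j = N (j + 1)) ∧
      ∀ m, ∑ i ∈ Finset.range (n + 1), (-1 : ℚ) ^ i * (i.choose m : ℚ) * (N i : ℚ)
        = (-1) ^ n * (N m : ℚ) := by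
  classical
  obtain ⟨z, hz⟩ := P.nonempty_int
  change z ∈ interior P.carrier at hz
  have hcar : ∀ s, DsFct P s → ∀ v ∈ s, v ∈ P.carrier := fun s h v hv =>
    (ds_fct_extreme P s h v hv).1
  have hVs : ∀ s, DsFct P s → s ⊆ P.verts := by
    intro s h v hv
    have : v ∈ (P.verts : Set (EuclideanSpace ℝ (Fin n))) :=
      extremePoints_convexHull_subset (ds_fct_extreme P s h v hv)
    exact this
  set 𝓕 : Finset (Finset (EuclideanSpace ℝ (Fin n))) := P.verts.powerset.filter (DsFct P) with h𝓕d
  have h𝓕 : ∀ s, s ∈ 𝓕 ↔ DsFct P s := by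
    intro s
    rw [h𝓕d, Finset.mem_filter, Finset.mem_powerset]
    exact ⟨fun h => h.2, fun h => ⟨hVs s h, h⟩⟩
  set Δ : Finset (Finset (EuclideanSpace ℝ (Fin n))) :=
    P.verts.powerset.filter (fun G => ∃ F ∈ 𝓕, G ⊆ F) with hΔd
  have hΔ : ∀ G, G ∈ Δ ↔ ∃ F ∈ 𝓕, G ⊆ F := by
    intro G
    rw [hΔd, Finset.mem_filter, Finset.mem_powerset]
    refine ⟨fun h => h.2, fun h => ⟨?_, h⟩⟩
    obtain ⟨F, hF, hG⟩ := h
    exact hG.trans (hVs F ((h𝓕 F).1 hF))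
  have hκe : ∀ s, ∃ κ : EuclideanSpace ℝ (Fin n) → EuclideanSpace ℝ (Fin n) →ₗ[ℝ] ℝ,
      s ∈ 𝓕 → (∀ x, x = ∑ v ∈ s, κ v x • (v - z)) ∧
      (∀ v ∈ s, ∀ w ∈ s, κ v (w - z) = if v = w then 1 else 0) := by
    intro s
    by_cases h : s ∈ 𝓕
    · obtain ⟨hcard, haff, l, a, hl, hle, hF⟩ := (h𝓕 s).1 h
      obtain ⟨κ, hκ⟩ := ds_kappa s hcard haff l a
        (fun v hv => (ds_fct_mem P s l a hF v hv).2) z (ds_int_lt _ l a hle hl z hz)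
      exact ⟨κ, fun _ => hκ⟩
    · exact ⟨0, fun h' => absurd h' h⟩
  choose κ hκ using hκe
  have hLe : ∀ s, ∃ L : EuclideanSpace ℝ (Fin n) →ₗ[ℝ] ℝ, s ∈ 𝓕 →
      (∀ x ∈ P.carrier, L (x - z) ≤ 1) ∧ (∀ x ∈ P.carrier, L (x - z) = 1 ↔
        x ∈ convexHull ℝ (s : Set (EuclideanSpace ℝ (Fin n)))) := by
    intro s
    by_cases h : s ∈ 𝓕
    · obtain ⟨L, hL⟩ := ds_L P s ((h𝓕 s).1 h) z hz
      exact ⟨L, fun _ => hL⟩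
    · exact ⟨0, fun h' => absurd h' h⟩
  choose L hL using hLe
  have hmain := ds_lin n (fun v => v - z) 𝓕 Δ κ L (fun F hF => ((h𝓕 F).1 hF).1) hΔ
    (fun F hF => (hκ F hF).1) (fun F hF => (hκ F hF).2)
    (fun F hF F' hF' v hv => (hL F hF).1 v (hcar F' ((h𝓕 F').1 hF') v hv))
    (fun F hF F' hF' v hv => by
      rw [(hL F hF).2 v (hcar F' ((h𝓕 F').1 hF') v hv)]
      exact ⟨fun h => ds_extreme_mem P F (hcar F ((h𝓕 F).1 hF)) v
        (ds_fct_extreme P F' ((h𝓕 F').1 hF') v hv) h, fun h => subset_convexHull ℝ _ h⟩)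
    (fun y => by
      obtain ⟨s, hs1, w, hw0, hw⟩ := ds_cover hn P hs z hz y
      have hsF := (h𝓕 s).2 hs1
      refine ⟨s, hsF, fun v hv => ?_⟩
      have : κ s v y = w v := by
        conv_lhs => rw [hw]
        rw [map_sum]
        simp only [map_smul, smul_eq_mul]
        rw [Finset.sum_congr rfl (fun x hx => by rw [(hκ s hsF).2 v hv x hx])]
        simp [hv]
      rw [this]
      exact hw0 v hv)
  refine ⟨fun i => (Δ.filter (fun G => G.card = i)).card, ?_, ?_, ?_⟩
  · have : Δ.filter (fun G => G.card = 0) = {∅} := by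
      ext G
      rw [Finset.mem_filter, Finset.mem_singleton, Finset.card_eq_zero]
      refine ⟨fun h => h.2, fun h => ⟨?_, h⟩⟩
      rw [hΔ, h]
      obtain ⟨s, hs1, -⟩ := ds_cover hn P hs z hz 0
      exact ⟨s, (h𝓕 s).2 hs1, Finset.empty_subset _⟩
    exact (congrArg Finset.card this).trans (Finset.card_singleton _)
  · intro j hj
    have himg : P.faces j = (fun G : Finset (EuclideanSpace ℝ (Fin n)) =>
        convexHull ℝ (G : Set (EuclideanSpace ℝ (Fin n)))) ''
        ((Δ.filter (fun G => G.card = j + 1) : Finset _) : Set _) := by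
      have hdim : ∀ F, DsFct P F → ∀ G, G ⊆ F → G.Nonempty →
          sdim (convexHull ℝ (G : Set (EuclideanSpace ℝ (Fin n)))) + 1 = G.card := by
        intro F hF G hG hne
        have haff : AffineIndependent ℝ (fun v : G => (v : EuclideanSpace ℝ (Fin n))) :=
          AffineIndependent.mono (s := (G : Set (EuclideanSpace ℝ (Fin n))))
            (t := (F : Set (EuclideanSpace ℝ (Fin n)))) hF.2.1 (by exact_mod_cast hG)
        have hpos := hne.card_pos
        have h1 := haff.finrank_vectorSpan (n := G.card - 1) (by simp; omega)
        unfold sdim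
        rw [← direction_affineSpan, affineSpan_convexHull, direction_affineSpan]
        have h2 : Set.range (fun v : G => (v : EuclideanSpace ℝ (Fin n))) = G := by simp
        rw [h2] at h1
        omega
      ext H
      constructor
      · rintro ⟨hexp, hne, hd⟩
        obtain ⟨l, a, hle, hH⟩ := ds_of_exposed _ _ hexp hne
        have hl : l ≠ 0 := by
          rintro rfl
          obtain ⟨x, hx⟩ := hne
          have ha : (0 : ℝ) = a := by
            rw [hH] at hx
            simpa using hx.2
          have : H = P.carrier := by
            rw [hH]
            ext x
            simp [ha]
          rw [this, ds_sdim_carrier] at hd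
          omega
        have hxx : ∃ x ∈ P.carrier, l x = a := by
          obtain ⟨x, hx⟩ := hne
          rw [hH] at hx
          exact ⟨x, hx⟩
        obtain ⟨s, hs1, hs2⟩ := ds_exists_fct P hs l a hl hle hxx
        have key := ds_face_simplex P.carrier (convex_convexHull ℝ _) s (hcar s hs1) l a hle hs2
        rw [← hH] at key
        have hGne : (s.filter (fun v => l v = a)).Nonempty := by
          rw [key, convexHull_nonempty_iff] at hne
          exact_mod_cast hne
        refine ⟨s.filter (fun v => l v = a), ?_, key.symm⟩
        rw [Finset.mem_coe, Finset.mem_filter, hΔ]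
        refine ⟨⟨s, (h𝓕 s).2 hs1, Finset.filter_subset _ _⟩, ?_⟩
        rw [← hdim s hs1 _ (Finset.filter_subset _ _) hGne, ← key, hd]
      · rintro ⟨G, hG, rfl⟩
        rw [Finset.mem_coe, Finset.mem_filter, hΔ] at hG
        obtain ⟨⟨F, hF, hGF⟩, hc⟩ := hG
        have hGne : G.Nonempty := by
          rw [← Finset.card_pos]; omega
        refine ⟨ds_sub_exposed P F ((h𝓕 F).1 hF) G hGF, ?_, ?_⟩
        · exact convexHull_nonempty_iff.2 (by exact_mod_cast hGne)
        · have := hdim F ((h𝓕 F).1 hF) G hGF hGne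
          simp only at this ⊢
          omega
    unfold ConvexPolytope.fcount
    rw [himg, Set.ncard_image_of_injOn, Set.ncard_coe_finset]
    have hsub : ∀ G ∈ Δ, ∀ G' ∈ Δ, convexHull ℝ (G : Set (EuclideanSpace ℝ (Fin n)))
        = convexHull ℝ (G' : Set (EuclideanSpace ℝ (Fin n))) → G ⊆ G' := by
      intro G hG G' hG' h v hv
      obtain ⟨F, hF, hGF⟩ := (hΔ G).1 hG
      obtain ⟨F', hF', hGF'⟩ := (hΔ G').1 hG'
      apply ds_extreme_mem P G' (fun v hv => hcar F' ((h𝓕 F').1 hF') v (hGF' hv)) v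
        (ds_fct_extreme P F ((h𝓕 F).1 hF) v (hGF hv))
      rw [← h]
      exact subset_convexHull ℝ _ hv
    intro G hG G' hG' h
    rw [Finset.mem_coe, Finset.mem_filter] at hG hG'
    exact (hsub G hG.1 G' hG'.1 h).antisymm (hsub G' hG'.1 G hG.1 h.symm)
  · intro m
    rw [← hmain m]
    rw [← Finset.sum_fiberwise_of_maps_to (s := Δ) (t := Finset.range (n + 1))
      (g := fun G => G.card)]
    · apply Finset.sum_congr rfl
      intro i _
      rw [Finset.sum_congr rfl (g := fun _ => (-1 : ℚ) ^ i * (i.choose m : ℚ))]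
      · rw [Finset.sum_const, nsmul_eq_mul, mul_comm]
      · intro G hG
        rw [(Finset.mem_filter.1 hG).2]
    · intro G hG
      obtain ⟨F, hF, hGF⟩ := (hΔ G).1 hG
      have h1 := Finset.card_le_card hGF
      rw [((h𝓕 F).1 hF).1] at h1
      rw [Finset.mem_range]
      omega

/-- The Dehn–Sommerville equations for an `n`-dimensional simplicial convex polytope:
for `-1 ≤ k ≤ n - 2`,
`Σ_{j=k}^{n-1} (-1)^j C(j+1, k+1) f_j = (-1)^{n-1} f_k`. -/
theorem dehn_sommerville (n : ℕ) (P : ConvexPolytope n) (hs : P.IsSimplicial)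
    (k : ℤ) (hk : -1 ≤ k) (hk' : k ≤ (n : ℤ) - 2) :
    ∑ j ∈ Finset.Icc k ((n : ℤ) - 1),
        (-1 : ℚ) ^ j * (Nat.choose (j + 1).toNat (k + 1).toNat : ℚ) * (P.fZ j : ℚ)
      = (-1 : ℚ) ^ ((n : ℤ) - 1) * (P.fZ k : ℚ) := by
  obtain ⟨N, hN0, hN1, hN⟩ := ds_main (by omega : 1 ≤ n) P hs
  have hfZ : ∀ i : ℕ, i ≤ n → P.fZ ((i : ℤ) - 1) = N i := by
    intro i hi
    unfold ConvexPolytope.fZ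
    rcases i with _ | i
    · simp [hN0]
    · rw [if_neg (by push_cast; omega), if_pos (by push_cast; omega), ← hN1 i (by omega)]
      congr 1
      push_cast
      omega
  obtain ⟨m, hm⟩ : ∃ m : ℕ, k = (m : ℤ) - 1 := ⟨(k + 1).toNat, by omega⟩
  subst hm
  have hsgn : ∀ i : ℕ, (-1 : ℚ) ^ ((i : ℤ) - 1) = - (-1) ^ i := by
    intro i
    rw [zpow_sub_one₀ (by norm_num), zpow_natCast]
    norm_num
  have himg : Finset.Icc ((m : ℤ) - 1) ((n : ℤ) - 1)
      = (Finset.Icc m n).image (fun i : ℕ => (i : ℤ) - 1) := by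
    ext j
    simp only [Finset.mem_Icc, Finset.mem_image]
    constructor
    · intro h
      exact ⟨(j + 1).toNat, by omega, by omega⟩
    · rintro ⟨i, h, rfl⟩
      omega
  rw [himg, Finset.sum_image (by intro a _ b _ h; simpa using h), hfZ m (by omega), hsgn n]
  have hsub : ∑ i ∈ Finset.Icc m n, (-1 : ℚ) ^ i * (i.choose m : ℚ) * (N i : ℚ)
      = ∑ i ∈ Finset.range (n + 1), (-1 : ℚ) ^ i * (i.choose m : ℚ) * (N i : ℚ) := by
    apply Finset.sum_subset
    · intro i hi
      rw [Finset.mem_Icc] at hi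
      rw [Finset.mem_range]
      omega
    · intro i hi hi'
      rw [Finset.mem_range] at hi
      rw [Finset.mem_Icc] at hi'
      rw [Nat.choose_eq_zero_of_lt (by omega)]
      simp
  rw [neg_mul, ← hN m, ← hsub, ← Finset.sum_neg_distrib]
  apply Finset.sum_congr rfl
  intro i hi
  rw [Finset.mem_Icc] at hi
  rw [hfZ i hi.2, hsgn i]
  have h1 : ((i : ℤ) - 1 + 1).toNat = i := by omega
  have h2 : ((m : ℤ) - 1 + 1).toNat = m := by omega
  rw [h1, h2]
  ring
end
end

section
/- For every 7-dimensional simplicial convex polytope P ⊂ ℝ⁷, the face numbers satisfy: f₃ = 5f₂ − 15f₁ + 35f₀ − 70, f₄ = 9f₂ − 34f₁ + 84f₀ − 168, f₅ = 7f₂ − 28f₁ + 70f₀ − 140, and f₆ = 2f₂ − 8f₁ + 20f₀ − 40. -/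
open scoped BigOperators

noncomputable section

open Filter Topology in
lemma ev_gen {V : Type*} [AddCommGroup V] [Module ℝ V] (w : Submodule ℝ V) (p v : V)
    (hv : v ∉ w) : ∀ᶠ ε : ℝ in 𝓝[>] 0, p + ε • v ∉ w := by
  by_cases h : ∃ e : ℝ, 0 < e ∧ p + e • v ∈ w
  · obtain ⟨e, he, hpe⟩ := h
    have : ∀ᶠ ε : ℝ in 𝓝[>] 0, ε < e := nhdsWithin_le_nhds (Iio_mem_nhds he)
    filter_upwards [this] with ε hε hmem
    apply hv
    have h1 : (e - ε) • v ∈ w := by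
      have := w.sub_mem hpe hmem
      convert this using 1
      module
    have h2 := w.smul_mem (e - ε)⁻¹ h1
    rwa [smul_smul, inv_mul_cancel₀ (by linarith), one_smul] at h2
  · push Not at h
    filter_upwards [self_mem_nhdsWithin] with ε hε
    exact h ε hε

open Filter Topology in
lemma ev_neg (x y : ℝ) (h : x < 0 ∨ (x = 0 ∧ y < 0)) :
    ∀ᶠ ε : ℝ in 𝓝[>] 0, x + ε * y < 0 := by
  rcases h with h | ⟨rfl, h⟩
  · have : Tendsto (fun ε : ℝ => x + ε * y) (𝓝 0) (𝓝 (x + 0 * y)) := by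
      apply Continuous.tendsto; fun_prop
    exact (this.mono_left nhdsWithin_le_nhds).eventually_lt_const (by simpa using h)
  · filter_upwards [self_mem_nhdsWithin] with ε hε
    have : 0 < ε := hε
    nlinarith

/-- combinatorial fan data -/
structure FanData (ι V : Type*) [DecidableEq ι] [AddCommGroup V] [Module ℝ V] where
  a : ι → V
  F : Finset (Finset ι)
  c : Finset ι → ι → V →ₗ[ℝ] ℝ
  l : Finset ι → V →ₗ[ℝ] ℝ
  W : Finset (Submodule ℝ V)
  hrep : ∀ s ∈ F, ∀ q, ∑ i ∈ s, c s i q • a i = q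
  hdual : ∀ s ∈ F, ∀ i ∈ s, ∀ j ∈ s, c s i (a j) = if i = j then 1 else 0
  hl1 : ∀ s ∈ F, ∀ i ∈ s, l s (a i) = 1
  hl2 : ∀ s ∈ F, ∀ s' ∈ F, ∀ i ∈ s', i ∉ s → l s (a i) < 1
  hW : ⊤ ∉ W
  hcov : ∀ q, (∀ w ∈ W, q ∉ w) → ∃ s ∈ F, ∀ i ∈ s, 0 ≤ c s i q

namespace FanData
variable {ι V : Type*} [DecidableEq ι] [AddCommGroup V] [Module ℝ V] (D : FanData ι V)

open Filter Topology in
lemma cover_v (p v : V) (hv : ∀ w ∈ D.W, v ∉ w) :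
    ∃ s ∈ D.F, ∀ i ∈ s, 0 ≤ D.c s i p ∧ (D.c s i p = 0 → 0 ≤ D.c s i v) := by
  by_contra hcon
  push Not at hcon
  have h1 : ∀ᶠ ε : ℝ in 𝓝[>] 0, ∀ w ∈ D.W, p + ε • v ∉ w := by
    rw [Filter.eventually_all_finset]
    exact fun w hw => ev_gen w p v (hv w hw)
  have h2 : ∀ᶠ ε : ℝ in 𝓝[>] 0, ∀ s ∈ D.F, ∃ i ∈ s, D.c s i (p + ε • v) < 0 := by
    rw [Filter.eventually_all_finset]
    intro s hs
    obtain ⟨i, his, hi⟩ := hcon s hs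
    have := ev_neg (D.c s i p) (D.c s i v) (by
      by_cases h : 0 ≤ D.c s i p
      · exact Or.inr (hi h)
      · exact Or.inl (not_le.1 h))
    filter_upwards [this] with ε hε
    exact ⟨i, his, by simpa using hε⟩
  obtain ⟨ε, hε1, hε2⟩ := (h1.and h2).exists
  obtain ⟨s, hs, hc⟩ := D.hcov _ hε1
  obtain ⟨i, hi, hlt⟩ := hε2 s hs
  exact absurd (hc i hi) (not_le.2 hlt)

lemma exists_generic : ∃ v : V, (∀ w ∈ D.W, v ∉ w) ∧ ∀ s ∈ D.F, ∀ i ∈ s, D.c s i v ≠ 0 := by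
  classical
  have := Subspace.biUnion_ne_univ_of_top_notMem (k := ℝ) (E := V)
    (s := D.W ∪ D.F.biUnion (fun s => s.image (fun i => LinearMap.ker (D.c s i)))) (by
      simp only [Finset.mem_union, Finset.mem_biUnion, Finset.mem_image, not_or]
      refine ⟨D.hW, ?_⟩
      rintro ⟨s, hs, i, hi, h⟩
      have h1 := D.hdual s hs i hi i hi
      have h2 : D.a i ∈ LinearMap.ker (D.c s i) := by rw [h]; trivial
      rw [LinearMap.mem_ker] at h2
      simp [h2] at h1)
  rw [Set.ne_univ_iff_exists_notMem] at this
  obtain ⟨v, hv⟩ := this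
  refine ⟨v, fun w hw h => hv ?_, fun s hs i hi h => hv ?_⟩
  · simp only [Set.mem_iUnion]
    exact ⟨w, Finset.mem_union_left _ hw, h⟩
  · simp only [Set.mem_iUnion]
    exact ⟨_, Finset.mem_union_right _
      (Finset.mem_biUnion.2 ⟨s, hs, Finset.mem_image_of_mem _ hi⟩), h⟩

lemma l_eq (s) (hs : s ∈ D.F) (q : V) : D.l s q = ∑ i ∈ s, D.c s i q := by
  conv_lhs => rw [← D.hrep s hs q]
  rw [map_sum]
  refine Finset.sum_congr rfl fun i hi => ?_
  rw [map_smul, D.hl1 s hs i hi, smul_eq_mul, mul_one]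

lemma l_le (s) (hs : s ∈ D.F) (s') (hs' : s' ∈ D.F) (i) (hi : i ∈ s') : D.l s (D.a i) ≤ 1 := by
  by_cases h : i ∈ s
  · exact (D.hl1 s hs i h).le
  · exact (D.hl2 s hs s' hs' i hi h).le

/-- every nonneg combination is maximized -/
lemma eval_le (s) (hs : s ∈ D.F) (q : V) (hq : ∀ i ∈ s, 0 ≤ D.c s i q) (g : V →ₗ[ℝ] ℝ)
    (hg : ∀ i ∈ s, g (D.a i) ≤ 1) : g q ≤ D.l s q := by
  rw [D.l_eq s hs]
  conv_lhs => rw [← D.hrep s hs q]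
  rw [map_sum]
  refine Finset.sum_le_sum fun i hi => ?_
  rw [map_smul, smul_eq_mul]
  nlinarith [hq i hi, hg i hi]

lemma c_sum (s) (hs : s ∈ D.F) (t : Finset ι) (hts : t ⊆ s) (i) (hi : i ∈ s) :
    D.c s i (∑ j ∈ t, D.a j) = if i ∈ t then 1 else 0 := by
  rw [map_sum, Finset.sum_congr rfl fun j hj => D.hdual s hs i hi j (hts hj)]
  simp

open Filter Topology in
lemma unique_facet (v : V) (hv : ∀ w ∈ D.W, v ∉ w)
    (hv2 : ∀ s ∈ D.F, ∀ i ∈ s, D.c s i v ≠ 0) (t : Finset ι) (ht : ∃ s ∈ D.F, t ⊆ s) :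
    ∃! s, s ∈ D.F ∧ t ⊆ s ∧ s.filter (fun i => D.c s i v < 0) ⊆ t := by
  obtain ⟨s0, hs0, hts0⟩ := ht
  obtain ⟨s, hs, hc⟩ := D.cover_v (∑ j ∈ t, D.a j) v hv
  have hts : t ⊆ s := by
    have e1 : D.l s0 (∑ j ∈ t, D.a j) = ∑ j ∈ t, (1 : ℝ) := by
      rw [map_sum]
      exact Finset.sum_congr rfl fun j hj => D.hl1 s0 hs0 j (hts0 hj)
    have e2 := D.eval_le s hs _ (fun i hi => (hc i hi).1) (D.l s0)
      (fun i hi => D.l_le s0 hs0 s hs i hi)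
    rw [e1, map_sum] at e2
    intro j hj
    by_contra hjs
    have : ∑ j ∈ t, D.l s (D.a j) < ∑ j ∈ t, (1 : ℝ) :=
      Finset.sum_lt_sum (fun i hi => D.l_le s hs s0 hs0 i (hts0 hi))
        ⟨j, hj, D.hl2 s hs s0 hs0 j (hts0 hj) hjs⟩
    linarith
  refine ⟨s, ⟨hs, hts, ?_⟩, ?_⟩
  · intro i hi
    rw [Finset.mem_filter] at hi
    by_contra hit
    have := (hc i hi.1).2 (by rw [D.c_sum s hs t hts i hi.1, if_neg hit])
    linarith [hi.2]
  · have key : ∀ s ∈ D.F, ∀ s' ∈ D.F, t ⊆ s → t ⊆ s' →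
        s.filter (fun i => D.c s i v < 0) ⊆ t → s'.filter (fun i => D.c s' i v < 0) ⊆ t →
        s ⊆ s' := by
      intro s hs s' hs' hts hts' hN hN'
      have pos : ∀ s ∈ D.F, t ⊆ s → s.filter (fun i => D.c s i v < 0) ⊆ t →
          ∀ᶠ ε : ℝ in 𝓝[>] 0, ∀ i ∈ s, 0 < D.c s i (∑ j ∈ t, D.a j + ε • v) := by
        intro s hs hts hN
        rw [Filter.eventually_all_finset]
        intro i hi
        have := ev_neg (-D.c s i (∑ j ∈ t, D.a j)) (-D.c s i v) (by
          rw [D.c_sum s hs t hts i hi]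
          by_cases hit : i ∈ t
          · left; simp [hit]
          · right
            refine ⟨by simp [hit], ?_⟩
            have h1 : ¬ D.c s i v < 0 := fun h => hit (hN (Finset.mem_filter.2 ⟨hi, h⟩))
            have h2 := hv2 s hs i hi
            have := lt_of_le_of_ne (not_lt.1 h1) h2.symm
            linarith)
        filter_upwards [this] with ε hε
        rw [map_add, map_smul, smul_eq_mul]
        linarith
      obtain ⟨ε, hp, hp'⟩ := ((pos s hs hts hN).and (pos s' hs' hts' hN')).exists
      set q := ∑ j ∈ t, D.a j + ε • v
      have e1 := D.eval_le s' hs' q (fun i hi => (hp' i hi).le) (D.l s)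
        (fun i hi => D.l_le s hs s' hs' i hi)
      rw [D.l_eq s hs] at e1
      have e2 : D.l s' q = ∑ i ∈ s, D.c s i q * D.l s' (D.a i) := by
        conv_lhs => rw [← D.hrep s hs q]
        rw [map_sum]
        exact Finset.sum_congr rfl fun i hi => by rw [map_smul, smul_eq_mul]
      intro i hi
      by_contra his
      have : ∑ i ∈ s, D.c s i q * D.l s' (D.a i) < ∑ i ∈ s, D.c s i q := by
        apply Finset.sum_lt_sum
        · intro j hj
          nlinarith [hp j hj, D.l_le s' hs' s hs j hj]
        · exact ⟨i, hi, by nlinarith [hp i hi, D.hl2 s' hs' s hs i hi his]⟩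
      linarith
    rintro s' ⟨hs', hts', hN'⟩
    have hN : s.filter (fun i => D.c s i v < 0) ⊆ t := by
      intro i hi
      rw [Finset.mem_filter] at hi
      by_contra hit
      have := (hc i hi.1).2 (by rw [D.c_sum s hs t hts i hi.1, if_neg hit])
      linarith [hi.2]
    exact (key s' hs' s hs hts' hts hN' hN).antisymm (key s hs s' hs' hts hts' hN hN')

/-- number of faces with `k` vertices -/
def K (k : ℕ) : Finset (Finset ι) := (D.F.biUnion Finset.powerset).filter (fun t => t.card = k)

lemma card_between (N s : Finset ι) (h : N ⊆ s) (k : ℕ) :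
    (s.powerset.filter (fun t => t.card = k ∧ N ⊆ t)).card =
      if N.card ≤ k then (s.card - N.card).choose (k - N.card) else 0 := by
  split_ifs with hk
  · rw [← Finset.card_sdiff_of_subset h, ← Finset.card_powersetCard]
    refine Finset.card_bij' (fun t _ => t \ N) (fun t _ => t ∪ N) ?_ ?_ ?_ ?_
    · intro t ht
      simp only [Finset.mem_filter, Finset.mem_powerset] at ht
      rw [Finset.mem_powersetCard, Finset.card_sdiff_of_subset ht.2.2, ht.2.1]
      exact ⟨Finset.sdiff_subset_sdiff ht.1 le_rfl, rfl⟩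
    · intro t ht
      rw [Finset.mem_powersetCard] at ht
      simp only [Finset.mem_filter, Finset.mem_powerset]
      have hd : Disjoint t N := Finset.disjoint_of_subset_left ht.1 Finset.sdiff_disjoint
      refine ⟨Finset.union_subset (ht.1.trans Finset.sdiff_subset) h, ?_,
        Finset.subset_union_right⟩
      rw [Finset.card_union_of_disjoint hd, ht.2]; omega
    · intro t ht
      simp only [Finset.mem_filter, Finset.mem_powerset] at ht
      exact Finset.sdiff_union_of_subset ht.2.2
    · intro t ht
      rw [Finset.mem_powersetCard] at ht
      have hd : Disjoint t N := Finset.disjoint_of_subset_left ht.1 Finset.sdiff_disjoint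
      exact Finset.union_sdiff_cancel_right hd
  · rw [Finset.card_eq_zero, Finset.filter_eq_empty_iff]
    rintro t - ⟨h1, h2⟩
    exact hk (h1 ▸ Finset.card_le_card h2)

lemma count (v : V) (hv : ∀ w ∈ D.W, v ∉ w)
    (hv2 : ∀ s ∈ D.F, ∀ i ∈ s, D.c s i v ≠ 0) (d : ℕ) (hd : ∀ s ∈ D.F, s.card = d) (k : ℕ) :
    (D.K k).card = ∑ i ∈ Finset.range (k + 1),
      (D.F.filter (fun s => (s.filter (fun i => D.c s i v < 0)).card = i)).card
        * (d - i).choose (k - i) := by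
  have h1 : D.K k = D.F.biUnion (fun s => s.powerset.filter
      (fun t => t.card = k ∧ s.filter (fun i => D.c s i v < 0) ⊆ t)) := by
    ext t
    simp only [K, Finset.mem_filter, Finset.mem_biUnion, Finset.mem_powerset]
    constructor
    · rintro ⟨h, hk⟩
      obtain ⟨s, ⟨a, b, c⟩, -⟩ := D.unique_facet v hv hv2 t h
      exact ⟨s, a, b, hk, c⟩
    · rintro ⟨s, a, b, hk, c⟩
      exact ⟨⟨s, a, b⟩, hk⟩
  rw [h1, Finset.card_biUnion]
  · have h2 : ∀ s ∈ D.F, (s.powerset.filter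
      (fun t => t.card = k ∧ s.filter (fun i => D.c s i v < 0) ⊆ t)).card =
      ∑ i ∈ Finset.range (k + 1), if (s.filter (fun i => D.c s i v < 0)).card = i then
        (d - i).choose (k - i) else 0 := by
      intro s hs
      rw [card_between _ _ (Finset.filter_subset _ _), hd s hs, Finset.sum_ite_eq]
      simp
    rw [Finset.sum_congr rfl h2, Finset.sum_comm]
    refine Finset.sum_congr rfl fun i _ => ?_
    rw [← Finset.sum_filter, Finset.sum_const, smul_eq_mul]
  · intro s hs s' hs' hne
    rw [Function.onFun, Finset.disjoint_left]
    intro t ht ht'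
    simp only [Finset.mem_filter, Finset.mem_powerset] at ht ht'
    exact hne ((D.unique_facet v hv hv2 t ⟨s, hs, ht.1⟩).unique ⟨hs, ht.1, ht.2.2⟩
      ⟨hs', ht'.1, ht'.2.2⟩)

lemma ds (d : ℕ) (hd : ∀ s ∈ D.F, s.card = d) : ∃ h : ℕ → ℕ,
    (∀ k, (D.K k).card = ∑ i ∈ Finset.range (k + 1), h i * (d - i).choose (k - i)) ∧
    (∀ k ≤ d, (D.K k).card = ∑ i ∈ Finset.range (k + 1), h (d - i) * (d - i).choose (k - i)) := by
  obtain ⟨v, hv, hv2⟩ := D.exists_generic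
  refine ⟨fun i => (D.F.filter (fun s => (s.filter (fun i => D.c s i v < 0)).card = i)).card,
    D.count v hv hv2 d hd, fun k hk => ?_⟩
  rw [D.count (-v) (fun w hw => by simpa using hv w hw)
    (fun s hs i hi => by simpa using hv2 s hs i hi) d hd k]
  refine Finset.sum_congr rfl fun i hi => ?_
  congr 2
  refine Finset.filter_congr fun s hs => ?_
  have h1 := Finset.card_filter_add_card_filter_not (s := s) (fun i => D.c s i v < 0)
  have h2 : s.filter (fun i => D.c s i (-v) < 0) = s.filter (fun i => ¬ D.c s i v < 0) := by
    refine Finset.filter_congr fun i hi => ?_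
    rw [map_neg, neg_lt_zero, not_lt]
    exact ⟨le_of_lt, fun h => lt_of_le_of_ne h (hv2 s hs i hi).symm⟩
  rw [h2]
  rw [hd s hs] at h1
  rw [Finset.mem_range] at hi
  omega

end FanData

lemma arith (f : ℕ → ℕ) (h : ℕ → ℕ)
    (h1 : ∀ k, f k = ∑ i ∈ Finset.range (k + 1), h i * (7 - i).choose (k - i))
    (h2 : ∀ k ≤ 7, f k = ∑ i ∈ Finset.range (k + 1), h (7 - i) * (7 - i).choose (k - i))
    (h0 : f 0 = 1) :
    (f 4 : ℤ) = 5 * f 3 - 15 * f 2 + 35 * f 1 - 70 ∧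
      (f 5 : ℤ) = 9 * f 3 - 34 * f 2 + 84 * f 1 - 168 ∧
      (f 6 : ℤ) = 7 * f 3 - 28 * f 2 + 70 * f 1 - 140 ∧
      (f 7 : ℤ) = 2 * f 3 - 8 * f 2 + 20 * f 1 - 40 := by
  have a0 := h1 0
  have a1 := h1 1
  have a2 := h1 2
  have a3 := h1 3
  have a4 := h1 4
  have a5 := h1 5
  have a6 := h1 6
  have a7 := h1 7
  have b0 := h2 0 (by norm_num)
  have b1 := h2 1 (by norm_num)
  have b2 := h2 2 (by norm_num)
  have b3 := h2 3 (by norm_num)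
  simp [Finset.sum_range_succ, Nat.choose] at a0 a1 a2 a3 a4 a5 a6 a7 b0 b1 b2 b3
  omega

lemma conv_max {n : ℕ} (A : Finset (EuclideanSpace ℝ (Fin n)))
    (f : EuclideanSpace ℝ (Fin n) → ℝ) (g : EuclideanSpace ℝ (Fin n) →ₗ[ℝ] ℝ) (b M : ℝ)
    (hfg : ∀ x, f x = g x + b)
    (hf : ∀ x ∈ A, f x ≤ M) (x) (hx : x ∈ convexHull ℝ (A : Set (EuclideanSpace ℝ (Fin n)))) :
    f x ≤ M ∧ (f x = M →
      x ∈ convexHull ℝ (A.filter (fun y => f y = M) : Set (EuclideanSpace ℝ (Fin n)))) := by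
  classical
  rw [Finset.mem_convexHull'] at hx
  obtain ⟨w, hw0, hw1, hwx⟩ := hx
  have hfx : f x = ∑ y ∈ A, w y * f y := by
    simp only [hfg, mul_add, Finset.sum_add_distrib, ← Finset.sum_mul, hw1, one_mul]
    rw [← hwx, map_sum]
    simp
  have hM : M = ∑ y ∈ A, w y * M := by rw [← Finset.sum_mul, hw1, one_mul]
  have hle : ∀ y ∈ A, w y * f y ≤ w y * M := fun y hy =>
    mul_le_mul_of_nonneg_left (hf y hy) (hw0 y hy)
  refine ⟨?_, fun hxM => ?_⟩
  · rw [hfx, hM]; exact Finset.sum_le_sum hle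
  · have heq : ∀ y ∈ A, w y * f y = w y * M := by
      rw [← Finset.sum_eq_sum_iff_of_le hle, ← hM, ← hfx, hxM]
    have hz : ∀ y ∈ A, y ∉ A.filter (fun y => f y = M) → w y = 0 := by
      intro y hy hy2
      by_contra h0
      exact hy2 (Finset.mem_filter.2 ⟨hy, mul_left_cancel₀ h0 (heq y hy)⟩)
    rw [Finset.mem_convexHull']
    refine ⟨w, fun y hy => hw0 y (Finset.filter_subset _ _ hy), ?_, ?_⟩
    · rw [← hw1]
      exact Finset.sum_subset (Finset.filter_subset _ _) hz
    · rw [← hwx]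
      exact Finset.sum_subset (Finset.filter_subset _ _)
        (fun y hy hy2 => by rw [hz y hy hy2, zero_smul])

lemma conv_max' {n : ℕ} (A : Finset (EuclideanSpace ℝ (Fin n))) (z : EuclideanSpace ℝ (Fin n))
    (g : EuclideanSpace ℝ (Fin n) →ₗ[ℝ] ℝ) (M : ℝ)
    (hf : ∀ x ∈ A, g (x - z) ≤ M) (x)
    (hx : x ∈ convexHull ℝ (A : Set (EuclideanSpace ℝ (Fin n)))) :
    g (x - z) ≤ M ∧ (g (x - z) = M →
      x ∈ convexHull ℝ (A.filter (fun y => g (y - z) = M) : Set (EuclideanSpace ℝ (Fin n)))) :=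
  conv_max A (fun x => g (x - z)) g (- g z) M (fun x => by simp [sub_eq_add_neg]) hf x hx

abbrev E7 := EuclideanSpace ℝ (Fin 7)

lemma vectorSpan_conv {n : ℕ} (s : Set (EuclideanSpace ℝ (Fin n))) :
    vectorSpan ℝ (convexHull ℝ s) = vectorSpan ℝ s := by
  rw [← direction_affineSpan, affineSpan_convexHull, direction_affineSpan]

namespace ConvexPolytope
variable (P : ConvexPolytope 7)

lemma sub_carrier {x} (hx : x ∈ P.verts) : x ∈ P.carrier := subset_convexHull ℝ _ hx

lemma sdim_carrier : sdim P.carrier = 7 := by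
  have := affineSpan_eq_top_of_nonempty_interior P.nonempty_int
  unfold sdim carrier
  rw [vectorSpan_conv, ← direction_affineSpan, this, AffineSubspace.direction_top, finrank_top]
  simp

lemma interior_lt {z : E7} (hz : z ∈ interior P.carrier) (g : E7 →ₗ[ℝ] ℝ) (hg : g ≠ 0) (M : ℝ)
    (h : ∀ x ∈ P.carrier, g x ≤ M) : g z < M := by
  obtain ⟨u, hu⟩ : ∃ u, 0 < g u := by
    by_contra hcon
    push Not at hcon
    apply hg
    ext u
    have h1 := hcon u
    have h2 := hcon (-u)
    rw [map_neg] at h2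
    simp only [LinearMap.zero_apply]
    linarith
  have hc : Filter.Tendsto (fun ε : ℝ => z + ε • u) (nhds 0) (nhds (z + (0:ℝ) • u)) := by
    apply Continuous.tendsto; fun_prop
  have : ∀ᶠ ε : ℝ in nhds 0, z + ε • u ∈ P.carrier := by
    apply hc
    simpa using mem_interior_iff_mem_nhds.1 hz
  have h2 : ∀ᶠ ε : ℝ in nhdsWithin 0 (Set.Ioi 0), z + ε • u ∈ P.carrier ∧ 0 < ε :=
    (this.filter_mono nhdsWithin_le_nhds).and self_mem_nhdsWithin
  obtain ⟨ε, h3, h4⟩ := h2.exists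
  have h5 := h _ h3
  rw [map_add, map_smul, smul_eq_mul] at h5
  nlinarith

lemma exists_g {z : E7} (hz : z ∈ interior P.carrier) (F : Set E7) (hF : IsExposed ℝ P.carrier F)
    (hne : F.Nonempty) (hd : sdim F ≠ 7) :
    ∃ g : E7 →ₗ[ℝ] ℝ, (∀ x ∈ P.carrier, g (x - z) ≤ 1) ∧ F = {x ∈ P.carrier | g (x - z) = 1} := by
  obtain ⟨l, hl⟩ := hF hne
  obtain ⟨x0, hx0⟩ := hne
  have hx0' := hx0
  rw [hl] at hx0'
  obtain ⟨hx0P, hmax⟩ := hx0'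
  have hl0 : (l : E7 →ₗ[ℝ] ℝ) ≠ 0 := by
    intro h0
    apply hd
    have : F = P.carrier := by
      have h1 : ∀ x, l x = 0 := fun x => by
        have := congrArg (fun f => f x) h0
        simpa using this
      rw [hl]; ext x; simp [h1]
    rw [this, P.sdim_carrier]
  have hlt := P.interior_lt hz l hl0 (l x0) hmax
  have hlt : l z < l x0 := hlt
  have hpos : 0 < l x0 - l z := by linarith
  refine ⟨(l x0 - l z)⁻¹ • (l : E7 →ₗ[ℝ] ℝ), ?_, ?_⟩
  · intro x hx
    have := hmax x hx
    simp only [LinearMap.smul_apply, smul_eq_mul, map_sub, ContinuousLinearMap.coe_coe]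
    rw [← mul_sub, inv_mul_le_iff₀ hpos]; linarith
  · rw [hl]
    ext x
    simp only [Set.mem_ofPred_eq, LinearMap.smul_apply, smul_eq_mul, map_sub,
      ContinuousLinearMap.coe_coe]
    rw [← mul_sub, inv_mul_eq_one₀ hpos.ne']
    constructor
    · rintro ⟨hx, h⟩
      exact ⟨hx, by linarith [h x0 hx0P, hmax x hx]⟩
    · rintro ⟨hx, h⟩
      exact ⟨hx, fun y hy => by linarith [hmax y hy]⟩

lemma exposed_of (z : E7) (g : E7 →ₗ[ℝ] ℝ) (hg : ∀ x ∈ P.carrier, g (x - z) ≤ 1) :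
    IsExposed ℝ P.carrier {x ∈ P.carrier | g (x - z) = 1} := by
  rintro ⟨x0, hx0, h0⟩
  refine ⟨LinearMap.toContinuousLinearMap g, ?_⟩
  simp only [map_sub] at hg h0 ⊢
  ext x
  simp only [Set.mem_ofPred_eq, LinearMap.coe_toContinuousLinearMap']
  constructor
  · rintro ⟨hx, h⟩
    exact ⟨hx, fun y hy => by linarith [hg y hy]⟩
  · rintro ⟨hx, h⟩
    exact ⟨hx, by linarith [hg x hx, h x0 hx0]⟩

def IsF (s : Finset E7) : Prop :=
  s.card = 7 ∧ AffineIndependent ℝ (fun v : s => (v : E7)) ∧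
    convexHull ℝ (s : Set E7) ∈ P.faces 6

variable {P}

lemma IsF.exists_g {z : E7} (hz : z ∈ interior P.carrier) {s : Finset E7} (hs : P.IsF s) :
    ∃ g : E7 →ₗ[ℝ] ℝ, (∀ x ∈ P.carrier, g (x - z) ≤ 1) ∧
      convexHull ℝ (s : Set E7) = {x ∈ P.carrier | g (x - z) = 1} :=
  P.exists_g hz _ hs.2.2.1 hs.2.2.2.1 (by rw [hs.2.2.2.2]; norm_num)

lemma IsF.sub {s : Finset E7} (hs : P.IsF s) {x} (hx : x ∈ s) : x ∈ P.carrier :=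
  hs.2.2.1.subset (subset_convexHull ℝ _ hx)

lemma IsF.li {z : E7} (hz : z ∈ interior P.carrier) {s : Finset E7} (hs : P.IsF s) :
    LinearIndependent ℝ (fun i : s => (i : E7) - z) := by
  obtain ⟨g, hg, hconv⟩ := hs.exists_g hz
  have hg1 : ∀ i ∈ s, g (i - z) = 1 := fun i hi => by
    have : i ∈ convexHull ℝ (s : Set E7) := subset_convexHull ℝ _ hi
    rw [hconv] at this
    exact this.2
  rw [Fintype.linearIndependent_iff]
  intro w hw i
  have h1 : ∑ i, w i = 0 := by
    have := congrArg g hw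
    rw [map_sum, map_zero] at this
    rw [← this]
    refine Finset.sum_congr rfl fun j _ => ?_
    rw [map_smul, hg1 j j.2, smul_eq_mul, mul_one]
  have h2 := (affineIndependent_iff (k := ℝ) (p := fun v : s => (v : E7))).1 hs.2.1
    Finset.univ w h1 (by
      simp only [smul_sub, Finset.sum_sub_distrib, ← Finset.sum_smul, h1, zero_smul,
        sub_zero] at hw
      exact hw)
  exact h2 i (Finset.mem_univ _)

lemma IsF.coords {z : E7} (hz : z ∈ interior P.carrier) {s : Finset E7} (hs : P.IsF s) :
    ∃ c : E7 → E7 →ₗ[ℝ] ℝ, (∀ q, ∑ i ∈ s, c i q • (i - z) = q) ∧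
      ∀ i ∈ s, ∀ j ∈ s, c i (j - z) = if i = j then 1 else 0 := by
  classical
  have hli := hs.li hz
  have : Nonempty s := by
    rw [Finset.nonempty_coe_sort, ← Finset.card_pos, hs.1]; norm_num
  let b := basisOfLinearIndependentOfCardEqFinrank hli (by simp [hs.1])
  have hb : ∀ i : s, b i = (i : E7) - z := fun i => by simp [b]
  refine ⟨fun i => if h : i ∈ s then b.coord ⟨i, h⟩ else 0, fun q => ?_, fun i hi j hj => ?_⟩
  · rw [← Finset.sum_coe_sort]
    conv_rhs => rw [← b.sum_repr q]
    refine Finset.sum_congr rfl fun i _ => ?_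
    simp [hb]
  · beta_reduce
    rw [dif_pos hi, ← hb ⟨j, hj⟩]
    simp [Finsupp.single_apply, eq_comm]

open Filter Topology in
lemma IsF.sub_exposed {z : E7} (hz : z ∈ interior P.carrier) {s : Finset E7} (hs : P.IsF s)
    (t : Finset E7) (hts : t ⊆ s) :
    IsExposed ℝ P.carrier (convexHull ℝ (t : Set E7)) := by
  classical
  obtain ⟨g, hg, hconv⟩ := hs.exists_g hz
  obtain ⟨c, hrep, hdual⟩ := hs.coords hz
  let m : E7 →ₗ[ℝ] ℝ := -∑ i ∈ s \ t, c i
  have hm : ∀ j ∈ s, m (j - z) = if j ∈ t then 0 else -1 := by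
    intro j hj
    simp only [m, LinearMap.neg_apply, LinearMap.sum_apply]
    rw [Finset.sum_congr rfl fun i hi => hdual i (Finset.sdiff_subset hi) j hj]
    by_cases hjt : j ∈ t <;> simp [hjt, hj]
  have hm0 : ∀ j ∈ s, m (j - z) ≤ 0 := by
    intro j hj; rw [hm j hj]; split_ifs <;> norm_num
  have hg1 : ∀ i ∈ s, g (i - z) = 1 := fun i hi => by
    have : i ∈ convexHull ℝ (s : Set E7) := subset_convexHull ℝ _ hi
    rw [hconv] at this
    exact this.2
  have hev : ∀ᶠ ε : ℝ in 𝓝[>] 0, ∀ x ∈ P.verts, g (x - z) < 1 → g (x - z) + ε * m (x - z) < 1 := by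
    rw [Filter.eventually_all_finset]
    intro x hx
    by_cases h : g (x - z) < 1
    · filter_upwards [ev_neg (g (x - z) - 1) (m (x - z)) (Or.inl (by linarith))] with ε hε _
      linarith
    · exact Filter.Eventually.of_forall fun _ h' => absurd h' h
  obtain ⟨ε, hε, hε0⟩ := (hev.and self_mem_nhdsWithin).exists
  have hε0 : 0 < ε := hε0
  have hcs : ∀ x ∈ P.verts, g (x - z) = 1 → x ∈ convexHull ℝ (s : Set E7) := by
    intro x hx h
    rw [hconv]; exact ⟨P.sub_carrier hx, h⟩
  have hv : ∀ x ∈ P.verts, (g + ε • m) (x - z) ≤ 1 := by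
    intro x hx
    simp only [LinearMap.add_apply, LinearMap.smul_apply, smul_eq_mul]
    rcases (hg x (P.sub_carrier hx)).lt_or_eq with h | h
    · exact (hε x hx h).le
    · have := (conv_max' s z m 0 hm0 x (hcs x hx h)).1
      nlinarith
  have hP : ∀ x ∈ P.carrier, (g + ε • m) (x - z) ≤ 1 := fun x hx =>
    (conv_max' P.verts z _ 1 hv x hx).1
  convert P.exposed_of z (g + ε • m) hP using 1
  apply Set.Subset.antisymm
  · intro x hx
    have hxP : x ∈ P.carrier := by
      refine convexHull_min ?_ (convex_convexHull ℝ _) hx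
      intro y hy
      exact hs.sub (hts hy)
    refine ⟨hxP, le_antisymm (hP x hxP) ?_⟩
    have := (conv_max' t z (-(g + ε • m)) (-1) ?_ x hx).1
    · rw [LinearMap.neg_apply] at this; linarith
    · intro y hy
      simp only [LinearMap.neg_apply, LinearMap.add_apply, LinearMap.smul_apply, smul_eq_mul]
      rw [hg1 y (hts hy), hm y (hts hy), if_pos hy]
      simp
  · rintro x ⟨hxP, hx⟩
    have := (conv_max' P.verts z _ 1 hv x hxP).2 hx
    refine convexHull_min ?_ (convex_convexHull ℝ _) this
    intro y hy
    rw [Finset.mem_coe, Finset.mem_filter] at hy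
    obtain ⟨hy, hy1⟩ := hy
    simp only [LinearMap.add_apply, LinearMap.smul_apply, smul_eq_mul] at hy1
    have hgy : g (y - z) = 1 := by
      rcases (hg y (P.sub_carrier hy)).lt_or_eq with h | h
      · exact absurd hy1 (hε y hy h).ne
      · exact h
    have hmy : m (y - z) = 0 := by
      have : ε * m (y - z) = 0 := by linarith
      exact (mul_eq_zero.1 this).resolve_left hε0.ne'
    have h3 := (conv_max' s z m 0 hm0 y (hcs y hy hgy)).2 hmy
    convert h3 using 3
    ext i
    rw [Finset.mem_filter]
    constructor
    · intro hi
      exact ⟨hts hi, by rw [hm i (hts hi), if_pos hi]⟩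
    · rintro ⟨hi, h⟩
      rw [hm i hi] at h
      by_contra hit
      simp [hit] at h

lemma IsF.extreme {s : Finset E7} (hs : P.IsF s) {i : E7} (hi : i ∈ s) :
    i ∈ Set.extremePoints ℝ P.carrier := by
  obtain ⟨z, hz⟩ := P.nonempty_int
  have := hs.sub_exposed hz {i} (by simpa using hi)
  rw [Finset.coe_singleton, convexHull_singleton] at this
  exact isExtreme_singleton.1 this.isExtreme

lemma ext_mem {i : E7} (hi : i ∈ Set.extremePoints ℝ P.carrier) (t : Set E7)
    (ht : convexHull ℝ t ⊆ P.carrier) (h : i ∈ convexHull ℝ t) : i ∈ t :=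
  extremePoints_convexHull_subset
    (inter_extremePoints_subset_extremePoints_of_subset ht ⟨h, hi⟩)

lemma IsF.sub_verts {s : Finset E7} (hs : P.IsF s) : s ⊆ P.verts := fun _ hi =>
  extremePoints_convexHull_subset (hs.extreme hi)

end ConvexPolytope

namespace ConvexPolytope
variable {P : ConvexPolytope 7}

lemma conv_carrier : Convex ℝ P.carrier := convex_convexHull ℝ _

lemma compact_carrier : IsCompact P.carrier := P.verts.finite_toSet.isCompact_convexHull ℝ

open Filter Topology in
/-- exit point of a ray -/
lemma exit_point {z : E7} (hz : z ∈ interior P.carrier) (q : E7) (hq : q ≠ 0) :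
    ∃ t : ℝ, 0 < t ∧ z + t • q ∈ P.carrier ∧ z + t • q ∉ interior P.carrier := by
  have hcont : Continuous (fun t : ℝ => z + t • q) := by fun_prop
  have hemb : Topology.IsClosedEmbedding (fun t : ℝ => z + t • q) :=
    (Homeomorph.addLeft z).isClosedEmbedding.comp (isClosedEmbedding_smul_left hq)
  have hcomp : IsCompact ((fun t : ℝ => z + t • q) ⁻¹' P.carrier) :=
    hemb.isCompact_preimage compact_carrier
  have hne : ((fun t : ℝ => z + t • q) ⁻¹' P.carrier).Nonempty :=
    ⟨0, by simpa using interior_subset hz⟩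
  have open_step : ∀ t : ℝ, z + t • q ∈ interior P.carrier → ∃ t' > t, z + t' • q ∈ P.carrier := by
    intro t ht
    have h1 : ∀ᶠ s : ℝ in 𝓝 t, z + s • q ∈ P.carrier :=
      hcont.continuousAt.eventually (mem_interior_iff_mem_nhds.1 ht)
    have h2 : ∀ᶠ s : ℝ in 𝓝[>] t, z + s • q ∈ P.carrier ∧ t < s :=
      (h1.filter_mono nhdsWithin_le_nhds).and self_mem_nhdsWithin
    obtain ⟨s, a, b⟩ := h2.exists
    exact ⟨s, b, a⟩
  obtain ⟨t, ht, hmax⟩ := hcomp.exists_isGreatest hne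
  refine ⟨t, ?_, ht, fun hint => ?_⟩
  · obtain ⟨s, hs, hsP⟩ := open_step 0 (by simpa using hz)
    exact lt_of_lt_of_le hs (hmax hsP)
  · obtain ⟨s, hs, hsP⟩ := open_step t hint
    exact absurd (hmax hsP) (not_le.2 hs)

lemma cov (hs : P.IsSimplicial) {z : E7} (hz : z ∈ interior P.carrier) (q : E7)
    (hq : ∀ A ⊆ P.verts, Submodule.span ℝ ((fun x => x - z) '' (A : Set E7)) ≠ ⊤ →
      q ∉ Submodule.span ℝ ((fun x => x - z) '' (A : Set E7))) :
    ∃ s, P.IsF s ∧ ∃ w : E7 → ℝ, (∀ i ∈ s, 0 ≤ w i) ∧ ∑ i ∈ s, w i • (i - z) = q := by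
  classical
  have hq0 : q ≠ 0 := by
    rintro rfl
    exact hq ∅ (by simp) (by simp [bot_ne_top]) (Submodule.zero_mem _)
  obtain ⟨t, ht, hrP, hri⟩ := exit_point hz q hq0
  set r := z + t • q with hr
  obtain ⟨f, hf⟩ := geometric_hahn_banach_open_point (P.conv_carrier.interior) isOpen_interior hri
  have hfz := hf z hz
  have hfle : ∀ x ∈ P.carrier, f x ≤ f r := by
    intro x hx
    have h1 : x ∈ closure (interior P.carrier) := by
      rw [P.conv_carrier.closure_interior_eq_closure_of_nonempty_interior ⟨z, hz⟩]
      exact subset_closure hx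
    exact closure_minimal (fun y hy => (hf y hy).le)
      (isClosed_le f.continuous continuous_const) h1
  set A := P.verts.filter (fun x => f x = f r) with hA
  have hmax := fun x hx => conv_max P.verts f f 0 (f r) (fun x => by simp)
    (fun x hx => hfle x (P.sub_carrier hx)) x hx
  have hrA : r ∈ convexHull ℝ (A : Set E7) := (hmax r hrP).2 rfl
  have hFA : convexHull ℝ (A : Set E7) = {x ∈ P.carrier | ∀ y ∈ P.carrier, f y ≤ f x} := by
    apply Set.Subset.antisymm
    · intro x hx
      have hxP : x ∈ P.carrier := convexHull_mono (Finset.coe_subset.2 (Finset.filter_subset _ _)) hx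
      refine ⟨hxP, fun y hy => (hfle y hy).trans ?_⟩
      have := (conv_max A (fun x => - f x) (-f : E7 →L[ℝ] ℝ) 0 (-f r) (fun x => by simp)
        (fun x hx => by rw [(Finset.mem_filter.1 hx).2]) x hx).1
      linarith
    · rintro x ⟨hxP, hx⟩
      exact (hmax x hxP).2 (le_antisymm (hfle x hxP) (hx r hrP))
  -- weights
  have hspan : Submodule.span ℝ ((fun x => x - z) '' (A : Set E7)) = ⊤ := by
    by_contra hne
    apply hq A (Finset.filter_subset _ _) hne
    obtain ⟨w, hw0, hw1, hwr⟩ := Finset.mem_convexHull'.1 hrA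
    have h1 : t • q = ∑ y ∈ A, w y • (y - z) := by
      simp only [smul_sub, Finset.sum_sub_distrib, ← Finset.sum_smul, hw1, hwr, one_smul, hr]
      simp
    have h2 : q = t⁻¹ • ∑ y ∈ A, w y • (y - z) := by
      rw [← h1, smul_smul, inv_mul_cancel₀ ht.ne', one_smul]
    rw [h2]
    exact Submodule.smul_mem _ _ (Submodule.sum_mem _ fun y hy => Submodule.smul_mem _ _
      (Submodule.subset_span ⟨y, hy, rfl⟩))
  have hf0 : (f : E7 →ₗ[ℝ] ℝ) ≠ 0 := by
    intro h0
    have h1 : ∀ x, f x = 0 := fun x => by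
      have := congrArg (fun f => f x) h0
      simpa using this
    rw [h1, h1] at hfz
    exact lt_irrefl _ hfz
  have hdim : sdim (convexHull ℝ (A : Set E7)) = 6 := by
    unfold sdim
    rw [vectorSpan_conv]
    have hle : vectorSpan ℝ (A : Set E7) ≤ LinearMap.ker (f : E7 →ₗ[ℝ] ℝ) := by
      unfold vectorSpan
      rw [Submodule.span_le]
      rintro _ ⟨x, hx, y, hy, rfl⟩
      have hx := (Finset.mem_filter.1 hx).2
      have hy := (Finset.mem_filter.1 hy).2
      simp [hx, hy]
    have hker : Module.finrank ℝ (LinearMap.ker (f : E7 →ₗ[ℝ] ℝ)) < 7 := by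
      have h1 : LinearMap.ker (f : E7 →ₗ[ℝ] ℝ) ≠ ⊤ := fun h => hf0 (LinearMap.ker_eq_top.1 h)
      have := Submodule.finrank_lt h1
      simpa using this
    have h6 : Module.finrank ℝ (vectorSpan ℝ (A : Set E7)) < 7 :=
      (Submodule.finrank_mono hle).trans_lt hker
    obtain ⟨x0, hx0⟩ : A.Nonempty := by
      rw [← Finset.coe_nonempty, ← convexHull_nonempty_iff (𝕜 := ℝ)]; exact ⟨r, hrA⟩
    have htop : (⊤ : Submodule ℝ E7) ≤
        vectorSpan ℝ (A : Set E7) ⊔ Submodule.span ℝ {x0 - z} := by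
      rw [← hspan, Submodule.span_le]
      rintro _ ⟨x, hx, rfl⟩
      have : x - z = (x - x0) + (x0 - z) := by abel
      beta_reduce
      rw [this]
      exact Submodule.add_mem_sup (vsub_mem_vectorSpan ℝ hx hx0)
        (Submodule.mem_span_singleton_self _)
    have h7 := Submodule.finrank_mono htop
    have h8 := Submodule.finrank_add_le_finrank_add_finrank (vectorSpan ℝ (A : Set E7))
      (Submodule.span ℝ {x0 - z})
    have h9 : Module.finrank ℝ (Submodule.span ℝ {x0 - z}) ≤ 1 := by
      simpa using finrank_span_le_card (R := ℝ) ({x0 - z} : Set E7)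
    rw [finrank_top] at h7
    simp only [finrank_euclideanSpace, Fintype.card_fin] at h7
    have fin : ∀ a d e : ℕ, a < 7 → 7 ≤ d → d ≤ a + e → e ≤ 1 → a = 6 := by omega
    exact fin _ _ _ h6 h7 h8 h9
  have hface : convexHull ℝ (A : Set E7) ∈ P.faces 6 := ⟨fun _ => ⟨f, hFA⟩, ⟨r, hrA⟩, hdim⟩
  obtain ⟨s, hs1, hs2, hs3⟩ := hs _ hface
  refine ⟨s, ⟨hs1, hs2, hs3 ▸ hface⟩, ?_⟩
  rw [hs3] at hrA
  obtain ⟨w, hw0, hw1, hwr⟩ := Finset.mem_convexHull'.1 hrA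
  refine ⟨fun i => t⁻¹ * w i, fun i hi => mul_nonneg (inv_nonneg.2 ht.le) (hw0 i hi), ?_⟩
  have h1 : t • q = ∑ y ∈ s, w y • (y - z) := by
    simp only [smul_sub, Finset.sum_sub_distrib, ← Finset.sum_smul, hw1, hwr, one_smul, hr]
    simp
  simp only [mul_smul]
  rw [← Finset.smul_sum, ← h1, smul_smul, inv_mul_cancel₀ ht.ne', one_smul]

open Classical in
lemma exists_fan (hs : P.IsSimplicial) {z : E7} (hz : z ∈ interior P.carrier) :
    ∃ D : FanData E7 E7, (∀ x, D.a x = x - z) ∧ (∀ s, s ∈ D.F ↔ P.IsF s) ∧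
      ∀ s ∈ D.F, (∀ x ∈ P.carrier, D.l s (x - z) ≤ 1) ∧
        convexHull ℝ (s : Set E7) = {x ∈ P.carrier | D.l s (x - z) = 1} := by
  have hF : ∀ s, s ∈ P.verts.powerset.filter (fun s => P.IsF s) ↔ P.IsF s := fun s => by
    rw [Finset.mem_filter, Finset.mem_powerset]
    exact ⟨fun h => h.2, fun h => ⟨h.sub_verts, h⟩⟩
  have hl : ∀ s, ∃ g : E7 →ₗ[ℝ] ℝ, P.IsF s → (∀ x ∈ P.carrier, g (x - z) ≤ 1) ∧
      convexHull ℝ (s : Set E7) = {x ∈ P.carrier | g (x - z) = 1} := fun s => by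
    by_cases h : P.IsF s
    · obtain ⟨g, hg⟩ := h.exists_g hz
      exact ⟨g, fun _ => hg⟩
    · exact ⟨0, fun h' => absurd h' h⟩
  have hc : ∀ s, ∃ c : E7 → E7 →ₗ[ℝ] ℝ, P.IsF s → (∀ q, ∑ i ∈ s, c i q • (i - z) = q) ∧
      ∀ i ∈ s, ∀ j ∈ s, c i (j - z) = if i = j then 1 else 0 := fun s => by
    by_cases h : P.IsF s
    · obtain ⟨g, hg, hg'⟩ := h.coords hz
      refine ⟨g, fun _ => ⟨hg, fun i hi j hj => ?_⟩⟩
      rw [hg' i hi j hj]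
    · exact ⟨0, fun h' => absurd h' h⟩
  choose l hl using hl
  choose c hc using hc
  refine ⟨{
    a := fun x => x - z
    F := P.verts.powerset.filter (fun s => P.IsF s)
    c := c
    l := l
    W := (P.verts.powerset.image (fun A : Finset E7 =>
      Submodule.span ℝ ((fun x => x - z) '' (A : Set E7)))).filter (fun w => w ≠ ⊤)
    hrep := fun s hs => (hc s ((hF s).1 hs)).1
    hdual := fun s hs => (hc s ((hF s).1 hs)).2
    hl1 := fun s hs i hi => ?_
    hl2 := fun s hs s' hs' i hi his => ?_
    hW := by simp
    hcov := fun q hq => ?_ }, fun x => rfl, hF, fun s hs => hl s ((hF s).1 hs)⟩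
  · have : i ∈ convexHull ℝ (s : Set E7) := subset_convexHull ℝ _ hi
    rw [(hl s ((hF s).1 hs)).2] at this
    exact this.2
  · have hs := (hF s).1 hs
    have hs' := (hF s').1 hs'
    refine lt_of_le_of_ne ((hl s hs).1 i (hs'.sub hi)) fun h => his ?_
    exact ext_mem (hs'.extreme hi) _ hs.2.2.1.subset (by
      rw [(hl s hs).2]; exact ⟨hs'.sub hi, h⟩)
  · obtain ⟨s, hsF, w, hw0, hw⟩ := cov hs hz q (fun A hA hne => hq _ (by
      rw [Finset.mem_filter]
      exact ⟨Finset.mem_image_of_mem _ (Finset.mem_powerset.2 hA), hne⟩))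
    refine ⟨s, (hF s).2 hsF, fun i hi => ?_⟩
    have : c s i q = w i := by
      rw [← hw, map_sum]
      rw [Finset.sum_congr rfl fun j hj => by
        rw [map_smul, (hc s hsF).2 i hi j hj]]
      simp [hi]
    rw [this]; exact hw0 i hi

open Classical in
lemma fcount_eq (D : FanData E7 E7) {z : E7} (hz : z ∈ interior P.carrier)
    (ha : ∀ x, D.a x = x - z) (hF : ∀ s, s ∈ D.F ↔ P.IsF s)
    (hl : ∀ s ∈ D.F, (∀ x ∈ P.carrier, D.l s (x - z) ≤ 1) ∧
        convexHull ℝ (s : Set E7) = {x ∈ P.carrier | D.l s (x - z) = 1})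
    (k : ℕ) (hk : k ≤ 6) (K : Finset (Finset E7))
    (hK : ∀ t, t ∈ K ↔ t.card = k + 1 ∧ ∃ s ∈ D.F, t ⊆ s) : P.fcount k = K.card := by
  have hcard : ∀ t s, P.IsF s → t ⊆ s → t.Nonempty →
      sdim (convexHull ℝ (t : Set E7)) + 1 = t.card := by
    intro t s hs hts hne
    unfold sdim
    rw [vectorSpan_conv]
    have : Nonempty t := hne.to_subtype
    have h1 := (hs.2.1.mono (s := (t : Set E7)) (by exact_mod_cast hts)).finrank_vectorSpan_add_one
    rw [Subtype.range_coe] at h1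
    rw [← Nat.card_eq_fintype_card, Nat.card_coe_set_eq, Set.ncard_coe_finset] at h1
    exact h1
  have himg : P.faces k = (fun t : Finset E7 => convexHull ℝ (t : Set E7)) '' (K : Set (Finset E7)) := by
    apply Set.Subset.antisymm
    · rintro G ⟨hG, hGne, hGd⟩
      obtain ⟨g, hg, hGg⟩ := P.exists_g hz G hG hGne (by omega)
      set A := P.verts.filter (fun x => g (x - z) = 1) with hA
      obtain ⟨v, hv, -⟩ := D.exists_generic
      obtain ⟨s, hs, hc⟩ := D.cover_v (∑ j ∈ A, D.a j) v hv
      have hsF := (hF s).1 hs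
      have e1 : g (∑ j ∈ A, D.a j) = ∑ j ∈ A, (1 : ℝ) := by
        rw [map_sum]
        refine Finset.sum_congr rfl fun j hj => ?_
        rw [ha, (Finset.mem_filter.1 hj).2]
      have e2 := D.eval_le s hs _ (fun i hi => (hc i hi).1) g (fun i hi => by
        rw [ha]; exact hg i (hsF.sub hi))
      rw [e1, map_sum] at e2
      have hAP : ∀ j ∈ A, j ∈ P.carrier := fun j hj => P.sub_carrier (Finset.filter_subset _ _ hj)
      have hle : ∀ j ∈ A, D.l s (D.a j) ≤ 1 := fun j hj => by
        rw [ha]; exact (hl s hs).1 j (hAP j hj)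
      have heq := (Finset.sum_eq_sum_iff_of_le hle).1 (le_antisymm (Finset.sum_le_sum hle) e2)
      have hAs : (A : Set E7) ⊆ convexHull ℝ (s : Set E7) := by
        intro j hj
        rw [(hl s hs).2]
        refine ⟨hAP j hj, ?_⟩
        rw [← ha]; exact heq j hj
      have hGA : G ⊆ convexHull ℝ (s : Set E7) := by
        intro x hx
        rw [hGg] at hx
        have := (conv_max' P.verts z g 1 (fun y hy => hg y (P.sub_carrier hy)) x hx.1).2 hx.2
        exact convexHull_min hAs (convex_convexHull ℝ _) this
      have hGt : convexHull ℝ ((s.filter (fun x => g (x - z) = 1) : Finset E7) : Set E7) = G := by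
        apply Set.Subset.antisymm
        · refine convexHull_min ?_ (hG.convex P.conv_carrier)
          intro x hx
          rw [Finset.mem_coe, Finset.mem_filter] at hx
          rw [hGg]
          exact ⟨hsF.sub hx.1, hx.2⟩
        · intro x hx
          have hx2 := hx
          rw [hGg] at hx2
          exact (conv_max' s z g 1 (fun y hy => hg y (hsF.sub hy)) x (hGA hx)).2 hx2.2
      have hne : (s.filter (fun x => g (x - z) = 1)).Nonempty := by
        rw [← Finset.coe_nonempty, ← convexHull_nonempty_iff (𝕜 := ℝ), hGt]; exact hGne
      refine ⟨s.filter (fun x => g (x - z) = 1), ?_, hGt⟩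
      rw [Finset.mem_coe, hK]
      refine ⟨?_, s, hs, Finset.filter_subset _ _⟩
      rw [← hcard _ s hsF (Finset.filter_subset _ _) hne, hGt, hGd]
    · rintro _ ⟨t, ht, rfl⟩
      rw [Finset.mem_coe, hK] at ht
      obtain ⟨htk, s, hs, hts⟩ := ht
      have hsF := (hF s).1 hs
      have hne : t.Nonempty := by rw [← Finset.card_pos]; omega
      refine ⟨hsF.sub_exposed hz t hts, ?_, ?_⟩
      · rw [convexHull_nonempty_iff]; exact_mod_cast hne
      · have := hcard t s hsF hts hne
        beta_reduce
        omega
  unfold fcount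
  rw [himg, Set.InjOn.ncard_image, Set.ncard_coe_finset]
  have key : ∀ t ∈ K, ∀ t' ∈ K,
      convexHull ℝ (t : Set E7) = convexHull ℝ (t' : Set E7) → t ⊆ t' := by
    intro t ht t' ht' h i hi
    obtain ⟨-, s, hs, hts⟩ := (hK t).1 ht
    obtain ⟨-, s', hs', hts'⟩ := (hK t').1 ht'
    have hs := (hF s).1 hs
    have hs' := (hF s').1 hs'
    exact ext_mem (hs.extreme (hts hi)) _ (hs'.sub_exposed hz t' hts').subset
      (h ▸ subset_convexHull ℝ _ hi)
  intro t ht t' ht' h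
  exact (key t ht t' ht' h).antisymm (key t' ht' t ht h.symm)

end ConvexPolytope

/-- The Dehn–Sommerville relations for a `7`-dimensional simplicial convex polytope. -/
theorem dehn_sommerville_dim_seven (P : ConvexPolytope 7) (hs : P.IsSimplicial) :
    (P.fcount 3 : ℤ) = 5 * P.fcount 2 - 15 * P.fcount 1 + 35 * P.fcount 0 - 70 ∧
      (P.fcount 4 : ℤ) = 9 * P.fcount 2 - 34 * P.fcount 1 + 84 * P.fcount 0 - 168 ∧
      (P.fcount 5 : ℤ) = 7 * P.fcount 2 - 28 * P.fcount 1 + 70 * P.fcount 0 - 140 ∧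
      (P.fcount 6 : ℤ) = 2 * P.fcount 2 - 8 * P.fcount 1 + 20 * P.fcount 0 - 40 := by
  classical
  obtain ⟨z, hz⟩ := P.nonempty_int
  obtain ⟨D, ha, hF, hl⟩ := ConvexPolytope.exists_fan hs hz
  obtain ⟨h, h1, h2⟩ := D.ds 7 (fun s hs => ((hF s).1 hs).1)
  have hK : ∀ k t, t ∈ D.K k ↔ t.card = k ∧ ∃ s ∈ D.F, t ⊆ s := fun k t => by
    simp only [FanData.K, Finset.mem_filter, Finset.mem_biUnion, Finset.mem_powerset]
    exact and_comm
  have hf : ∀ k ≤ 6, P.fcount k = (D.K (k + 1)).card := fun k hk =>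
    ConvexPolytope.fcount_eq D hz ha hF hl k hk _ (hK (k + 1))
  have h0 : (D.K 0).card = 1 := by
    rw [Finset.card_eq_one]
    refine ⟨∅, ?_⟩
    ext t
    rw [hK, Finset.card_eq_zero, Finset.mem_singleton]
    refine ⟨fun h => h.1, fun h => ⟨h, ?_⟩⟩
    obtain ⟨v, hv, -⟩ := D.exists_generic
    obtain ⟨s, hs, -⟩ := D.hcov v hv
    exact ⟨s, hs, by simp [h]⟩
  rw [hf 0 (by norm_num), hf 1 (by norm_num), hf 2 (by norm_num), hf 3 (by norm_num),
    hf 4 (by norm_num), hf 5 (by norm_num), hf 6 (by norm_num)]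
  exact arith (fun k => (D.K k).card) h h1 h2 h0
end
end

section
/- For every 13-dimensional simplicial convex polytope P ⊂ ℝ¹³, the face numbers satisfy: f₆ = 8f₅ − 36f₄ + 120f₃ − 330f₂ + 792f₁ − 1716f₀ + 3432; f₇ = 27f₅ − 159f₄ + 585f₃ − 1683f₂ + 4125f₁ − 9009f₀ + 18018; f₈ = 50f₅ − 325f₄ + 1252f₃ − 3685f₂ + 9130f₁ − 20020f₀ + 40040; f₉ = 55f₅ − 374f₄ + 1474f₃ − 4389f₂ + 10934f₁ − 24024f₀ + 48048; f₁₀ = 36f₅ − 250f₄ + 996f₃ − 2982f₂ + 7448f₁ − 16380f₀ + 32760; f₁₁ = 13f₅ − 91f₄ + 364f₃ − 1092f₂ + 2730f₁ − 6006f₀ + 12012; f₁₂ = 2f₅ − 14f₄ + 56f₃ − 168f₂ + 420f₁ − 924f₀ + 1848. -/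
open scoped BigOperators

noncomputable section

section DSCore

open Filter Topology

variable {E : Type*} [AddCommGroup E] [Module ℝ E] {ι : Type*}

/-- vertex sets of facets -/
def DSFacet (w : ι → E) (T : Finset ι) : Prop :=
  ∃ a : E →ₗ[ℝ] ℝ, (∀ i, a (w i) ≤ 1) ∧ (∀ i, i ∈ T ↔ a (w i) = 1) ∧
    Submodule.span ℝ (w '' (T : Set ι)) = ⊤

/-- sets contained in proper faces -/
def DSFace (w : ι → E) (S : Finset ι) : Prop :=
  ∃ b : E →ₗ[ℝ] ℝ, (∀ i, b (w i) ≤ 1) ∧ ∀ i ∈ S, b (w i) = 1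

theorem ds_li [FiniteDimensional ℝ E] (w : ι → E) (T : Finset ι)
    (hspan : Submodule.span ℝ (w '' (T : Set ι)) = ⊤)
    (hcard : T.card ≤ Module.finrank ℝ E) :
    ⊤ ≤ Submodule.span ℝ (Set.range (fun i : T => w i)) ∧
      LinearIndependent ℝ (fun i : T => w i) := by
  have hr : Set.range (fun i : T => w i) = w '' (T : Set ι) := by
    ext x; simp
  have hsp : ⊤ ≤ Submodule.span ℝ (Set.range (fun i : T => w i)) := by
    rw [hr, hspan]
  have hc : Fintype.card T = Module.finrank ℝ E := by
    apply le_antisymm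
    · simpa using hcard
    · have := finrank_range_le_card (R := ℝ) (fun i : T => w i)
      rw [Set.finrank, eq_top_iff.2 hsp, finrank_top] at this
      exact this
  exact ⟨hsp, linearIndependent_of_top_le_span_of_card_eq_finrank hsp hc⟩

/-- the coordinates in a facet basis -/
theorem ds_coords [FiniteDimensional ℝ E] [DecidableEq ι] (w : ι → E) (T : Finset ι)
    (hspan : Submodule.span ℝ (w '' (T : Set ι)) = ⊤)
    (hcard : T.card ≤ Module.finrank ℝ E) :
    ∃ κ : ι → E →ₗ[ℝ] ℝ, (∀ x, x = ∑ i ∈ T, κ i x • w i) ∧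
      ∀ i ∈ T, ∀ j ∈ T, κ i (w j) = if i = j then 1 else 0 := by
  obtain ⟨hsp, hli⟩ := ds_li w T hspan hcard
  let B := Module.Basis.mk hli hsp
  have hB : ∀ i : T, B i = w i := fun i => by simp [B]
  refine ⟨fun i => if h : i ∈ T then B.coord ⟨i, h⟩ else 0, ?_, ?_⟩
  · intro x
    rw [← Finset.sum_coe_sort T]
    conv_lhs => rw [← B.sum_repr x]
    refine Finset.sum_congr rfl fun i _ => ?_
    simp [hB]
  · intro i hi j hj
    simp only [hi, dif_pos]
    rw [← hB ⟨j, hj⟩, Module.Basis.coord_apply, Module.Basis.repr_self, Finsupp.single_apply]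
    simp [eq_comm]

theorem ds_event_notMem (W : Submodule ℝ E) (p c : E) (hc : c ∉ W) :
    ∀ᶠ ε : ℝ in 𝓝[>] 0, p + ε • c ∉ W := by
  by_cases h : ∃ ε0 : ℝ, 0 < ε0 ∧ p + ε0 • c ∈ W
  · obtain ⟨ε0, h0, h1⟩ := h
    filter_upwards [Ioo_mem_nhdsGT h0] with ε hε hW
    apply hc
    have h2 := W.sub_mem h1 hW
    have h3 : (p + ε0 • c) - (p + ε • c) = (ε0 - ε) • c := by
      rw [sub_smul]; abel
    rw [h3] at h2
    exact (W.smul_mem_iff (by linarith [hε.2])).1 h2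
  · push Not at h
    filter_upwards [self_mem_nhdsWithin] with ε hε
    exact h ε hε

theorem ds_event_pos (a b : ℝ) (ha : 0 < a) : ∀ᶠ ε : ℝ in 𝓝[>] 0, 0 < a + ε * b := by
  have : Tendsto (fun ε : ℝ => a + ε * b) (𝓝 0) (𝓝 (a + 0 * b)) := by
    apply Continuous.tendsto; fun_prop
  have h2 := this.mono_left (nhdsWithin_le_nhds (s := Set.Ioi 0))
  exact h2.eventually_const_lt (by simpa using ha)

variable [Fintype ι] [DecidableEq ι]

/-- Existence and uniqueness of the facet seen from a face. -/
theorem ds_key (w : ι → E)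
    (H : ∀ x : E, ∃ b : E →ₗ[ℝ] ℝ, (∀ i, b (w i) ≤ 1) ∧ ∃ μ : ι → ℝ, (∀ i, 0 ≤ μ i) ∧
      (∀ i, μ i ≠ 0 → b (w i) = 1) ∧ x = ∑ i, μ i • w i)
    (κ : Finset ι → ι → E →ₗ[ℝ] ℝ)
    (hκ : ∀ T, DSFacet w T → (∀ x, x = ∑ i ∈ T, κ T i x • w i) ∧
      ∀ i ∈ T, ∀ j ∈ T, κ T i (w j) = if i = j then 1 else 0)
    (c : E) (hc : ∀ S : Finset ι, Submodule.span ℝ (w '' (S : Set ι)) ≠ ⊤ →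
      c ∉ Submodule.span ℝ (w '' (S : Set ι)))
    (hc0 : ∀ T, DSFacet w T → ∀ i ∈ T, κ T i c ≠ 0)
    (S : Finset ι) (hS : DSFace w S) :
    ∃! T, DSFacet w T ∧ S ⊆ T ∧ ∀ i ∈ T, κ T i c < 0 → i ∈ S := by
  obtain ⟨b, hb1, hbS⟩ := hS
  set p : E := ∑ i ∈ S, w i with hp
  have hpos : ∀ T, DSFacet w T → S ⊆ T → ∀ i ∈ T, κ T i p = if i ∈ S then 1 else 0 := by
    intro T hT hST i hi
    rw [hp, map_sum, Finset.sum_congr rfl (fun j hj => (hκ T hT).2 i hi j (hST hj))]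
    simp
  refine existsUnique_of_exists_of_unique ?_ ?_
  · have e1 : ∀ᶠ ε : ℝ in 𝓝[>] 0, ∀ U : Finset ι, Submodule.span ℝ (w '' (U : Set ι)) ≠ ⊤ →
        p + ε • c ∉ Submodule.span ℝ (w '' (U : Set ι)) := by
      rw [eventually_all]
      intro U
      by_cases hU : Submodule.span ℝ (w '' (U : Set ι)) = ⊤
      · simp [hU]
      · filter_upwards [ds_event_notMem _ p c (hc U hU)] with ε h _
        exact h
    have e2 : ∀ᶠ ε : ℝ in 𝓝[>] 0, ∀ (T : Finset ι) (i : ι), κ T i p < 0 →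
        κ T i p + ε * κ T i c < 0 := by
      rw [eventually_all]; intro T
      rw [eventually_all]; intro i
      by_cases h : κ T i p < 0
      · filter_upwards [ds_event_pos (-κ T i p) (-κ T i c) (by linarith)] with ε h _
        linarith
      · simp [h]
    obtain ⟨ε, h1, h2, hε⟩ := (e1.and (e2.and self_mem_nhdsWithin)).exists
    have hε : 0 < ε := hε
    obtain ⟨a, ha1, μ, hμ0, hμ1, hx⟩ := H (p + ε • c)
    let T : Finset ι := Finset.univ.filter (fun i => a (w i) = 1)
    have hmT : ∀ i, i ∈ T ↔ a (w i) = 1 := by simp [T]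
    have hxT : p + ε • c = ∑ i ∈ T, μ i • w i := by
      rw [hx]
      symm
      apply Finset.sum_subset (Finset.subset_univ _)
      intro i _ hi
      have : μ i = 0 := by
        by_contra h
        exact hi ((hmT i).2 (hμ1 i h))
      simp [this]
    have hTf : DSFacet w T := by
      refine ⟨a, ha1, hmT, ?_⟩
      by_contra h
      apply h1 T h
      rw [hxT]
      exact Submodule.sum_mem _ fun i hi => Submodule.smul_mem _ _
        (Submodule.subset_span ⟨i, hi, rfl⟩)
    have hk : ∀ i ∈ T, κ T i p + ε * κ T i c = μ i := by
      intro i hi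
      have : κ T i (p + ε • c) = μ i := by
        rw [hxT, map_sum, Finset.sum_congr rfl (fun j hj => by
          rw [map_smul, (hκ T hTf).2 i hi j hj])]
        simp [hi]
      simpa using this
    have hp0 : ∀ i ∈ T, 0 ≤ κ T i p := by
      intro i hi
      by_contra h
      have := h2 T i (not_le.1 h)
      have := hk i hi
      have := hμ0 i
      linarith
    have hap : b p ≤ a p := by
      conv_lhs => rw [(hκ T hTf).1 p]
      conv_rhs => rw [(hκ T hTf).1 p]
      rw [map_sum, map_sum]
      apply Finset.sum_le_sum
      intro i hi
      rw [map_smul, map_smul, smul_eq_mul, smul_eq_mul, (hmT i).1 hi]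
      exact mul_le_mul_of_nonneg_left (hb1 i) (hp0 i hi)
    have hST : S ⊆ T := by
      rw [hp, map_sum, map_sum, Finset.sum_congr rfl hbS] at hap
      have heq := (Finset.sum_eq_sum_iff_of_le (s := S) (f := fun i => a (w i))
        (g := fun _ => (1 : ℝ)) (fun i _ => ha1 i)).1
        (le_antisymm (Finset.sum_le_sum fun i _ => ha1 i) hap)
      intro i hi
      exact (hmT i).2 (heq i hi)
    refine ⟨T, hTf, hST, fun i hi hneg => ?_⟩
    by_contra hiS
    have h3 := hk i hi
    rw [hpos T hTf hST i hi, if_neg hiS] at h3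
    have := hμ0 i
    nlinarith
  · have hmain : ∀ T, DSFacet w T → S ⊆ T → (∀ i ∈ T, κ T i c < 0 → i ∈ S) →
        ∀ᶠ ε : ℝ in 𝓝[>] 0, ∀ i, i ∈ T → 0 < κ T i (p + ε • c) := by
      intro T hT hST hN
      rw [eventually_all]
      intro i
      by_cases hi : i ∈ T
      · by_cases hiS : i ∈ S
        · filter_upwards [ds_event_pos 1 (κ T i c) one_pos] with ε h _
          simpa [hpos T hT hST i hi, hiS] using h
        · filter_upwards [self_mem_nhdsWithin] with ε hε _
          have hε : 0 < ε := hε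
          have : 0 < κ T i c := by
            rcases lt_or_gt_of_ne (hc0 T hT i hi) with h | h
            · exact absurd (hN i hi h) hiS
            · exact h
          simp only [map_add, map_smul, hpos T hT hST i hi, hiS, if_false, smul_eq_mul]
          positivity
      · simp [hi]
    have hle : ∀ (x : E) T T', DSFacet w T → ∀ a a' : E →ₗ[ℝ] ℝ, (∀ i ∈ T, a (w i) = 1) →
        (∀ i, a' (w i) ≤ 1) → (∀ i, i ∈ T' ↔ a' (w i) = 1) →
        (∀ i ∈ T, 0 < κ T i x) → a' x ≤ a x ∧ (a x ≤ a' x → T ⊆ T') := by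
      intro x T T' hT a a' ha ha' hT' hx
      have e1 : a x = ∑ i ∈ T, κ T i x := by
        conv_lhs => rw [(hκ T hT).1 x]
        rw [map_sum]
        exact Finset.sum_congr rfl fun i hi => by simp [ha i hi]
      have e2 : a' x = ∑ i ∈ T, κ T i x * a' (w i) := by
        conv_lhs => rw [(hκ T hT).1 x]
        rw [map_sum]
        exact Finset.sum_congr rfl fun i hi => by simp
      have hl : ∀ i ∈ T, κ T i x * a' (w i) ≤ κ T i x := fun i hi => by
        nlinarith [hx i hi, ha' i]
      have h1 : a' x ≤ a x := by
        rw [e1, e2]; exact Finset.sum_le_sum hl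
      refine ⟨h1, fun h2 i hi => (hT' i).2 ?_⟩
      have := (Finset.sum_eq_sum_iff_of_le hl).1 (by rw [← e1, ← e2]; exact le_antisymm h1 h2) i hi
      have h3 := hx i hi
      nlinarith
    rintro T T' ⟨hT, hST, hN⟩ ⟨hT', hST', hN'⟩
    obtain ⟨ε, hx, hx'⟩ := ((hmain T hT hST hN).and (hmain T' hT' hST' hN')).exists
    obtain ⟨a, ha1, haT, -⟩ := id hT
    obtain ⟨a', ha1', haT', -⟩ := id hT'
    have r1 := hle _ T T' hT a a' (fun i hi => (haT i).1 hi) ha1' haT' hx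
    have r2 := hle _ T' T hT' a' a (fun i hi => (haT' i).1 hi) ha1 haT hx'
    exact Finset.Subset.antisymm (r1.2 r2.1) (r2.2 r1.1)


theorem ds_interval_count (n k : ℕ) (hk : k ≤ n) (T N : Finset ι) (hT : T.card = n) (hN : N ⊆ T) :
    (Finset.univ.filter (fun S : Finset ι => S.card = k ∧ S ⊆ T ∧ N ⊆ S)).card
      = (n - N.card).choose (n - k) := by
  rw [← hT, ← Finset.card_sdiff_of_subset hN, ← Finset.card_powersetCard]
  apply Finset.card_nbij' (fun S => T \ S) (fun S => T \ S)
  · intro S hS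
    simp only [Finset.coe_filter, Finset.mem_univ, true_and, Set.mem_ofPred_eq] at hS
    obtain ⟨h1, h2, h3⟩ := hS
    simp only [Finset.mem_coe, Finset.mem_powersetCard]
    exact ⟨Finset.sdiff_subset_sdiff (le_refl _) h3, by rw [Finset.card_sdiff_of_subset h2, h1]⟩
  · intro S hS
    simp only [Finset.mem_coe, Finset.mem_powersetCard] at hS
    obtain ⟨h1, h2⟩ := hS
    have h3 : S ⊆ T := h1.trans Finset.sdiff_subset
    simp only [Finset.coe_filter, Finset.mem_univ, true_and, Set.mem_ofPred_eq]
    refine ⟨?_, Finset.sdiff_subset, ?_⟩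
    · rw [Finset.card_sdiff_of_subset h3]; omega
    · intro i hi
      rw [Finset.mem_sdiff]
      exact ⟨hN hi, fun h => (Finset.mem_sdiff.1 (h1 h)).2 hi⟩
  · intro S hS
    simp only [Finset.coe_filter, Finset.mem_univ, true_and, Set.mem_ofPred_eq] at hS
    simp [hS.2.1]
  · intro S hS
    simp only [Finset.mem_coe, Finset.mem_powersetCard] at hS
    have h3 : S ⊆ T := hS.1.trans Finset.sdiff_subset
    simp [h3]

open Classical in
theorem ds_count_aux (w : ι → E) (n k : ℕ) (hk : k ≤ n)
    (hcard : ∀ T, DSFacet w T → T.card = n)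
    (N : Finset ι → Finset ι) (hN : ∀ T, N T ⊆ T)
    (hkey : ∀ S, DSFace w S → ∃! T, DSFacet w T ∧ S ⊆ T ∧ N T ⊆ S) :
    (Finset.univ.filter (fun S : Finset ι => DSFace w S ∧ S.card = k)).card
      = ∑ T ∈ Finset.univ.filter (fun T => DSFacet w T), (n - (N T).card).choose (n - k) := by
  have : Finset.univ.filter (fun S : Finset ι => DSFace w S ∧ S.card = k)
      = (Finset.univ.filter (fun T => DSFacet w T)).biUnion (fun T =>
        Finset.univ.filter (fun S : Finset ι => S.card = k ∧ S ⊆ T ∧ N T ⊆ S)) := by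
    ext S
    simp only [Finset.mem_filter, Finset.mem_univ, true_and, Finset.mem_biUnion]
    constructor
    · rintro ⟨h1, h2⟩
      obtain ⟨T, ⟨hT, h3, h4⟩, -⟩ := hkey S h1
      exact ⟨T, hT, h2, h3, h4⟩
    · rintro ⟨T, ⟨a, ha1, ha2, -⟩, h2, h3, h4⟩
      exact ⟨⟨a, ha1, fun i hi => (ha2 i).1 (h3 hi)⟩, h2⟩
  rw [this, Finset.card_biUnion]
  · refine Finset.sum_congr rfl fun T hT => ?_
    exact ds_interval_count n k hk T (N T) (hcard T (by simpa using hT)) (hN T)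
  · intro T hT T' hT' hne
    refine Finset.disjoint_left.2 ?_
    intro S hS hS'
    simp only [Finset.mem_coe, Finset.mem_filter, Finset.mem_univ, true_and] at hS hS' hT hT'
    apply hne
    obtain ⟨a, ha1, ha2, -⟩ := id hT
    exact (hkey S ⟨a, ha1, fun i hi => (ha2 i).1 (hS.2.1 hi)⟩).unique ⟨hT, hS.2⟩ ⟨hT', hS'.2⟩

open Classical in
theorem ds_count [FiniteDimensional ℝ E] (w : ι → E) (n : ℕ) (hn : Module.finrank ℝ E = n)
    (H : ∀ x : E, ∃ b : E →ₗ[ℝ] ℝ, (∀ i, b (w i) ≤ 1) ∧ ∃ μ : ι → ℝ, (∀ i, 0 ≤ μ i) ∧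
      (∀ i, μ i ≠ 0 → b (w i) = 1) ∧ x = ∑ i, μ i • w i)
    (hcard : ∀ T, DSFacet w T → T.card ≤ n) :
    (∀ S, DSFace w S → ∃ T, DSFacet w T ∧ S ⊆ T) ∧
    ∃ h : ℕ → ℕ, ∀ k ≤ n,
    (Finset.univ.filter (fun S : Finset ι => DSFace w S ∧ S.card = k)).card
      = ∑ i ∈ Finset.range (n + 1), h i * (n - i).choose (n - k) ∧
    (Finset.univ.filter (fun S : Finset ι => DSFace w S ∧ S.card = k)).card
      = ∑ i ∈ Finset.range (n + 1), h i * i.choose (n - k) := by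
  have hge : ∀ T : Finset ι, Submodule.span ℝ (w '' (T : Set ι)) = ⊤ → n ≤ T.card := by
    intro T hT
    have := finrank_span_finset_le_card (R := ℝ) (T.image w)
    rw [Finset.coe_image, Set.finrank, hT, finrank_top, hn] at this
    exact this.trans Finset.card_image_le
  have hcard' : ∀ T, DSFacet w T → T.card = n := fun T hT =>
    le_antisymm (hcard T hT) (hge T hT.choose_spec.2.2)
  have hex : ∀ T, ∃ κ : ι → E →ₗ[ℝ] ℝ, DSFacet w T → (∀ x, x = ∑ i ∈ T, κ i x • w i) ∧
      ∀ i ∈ T, ∀ j ∈ T, κ i (w j) = if i = j then 1 else 0 := by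
    intro T
    by_cases hT : DSFacet w T
    · obtain ⟨κ, h⟩ := ds_coords w T hT.choose_spec.2.2 (by rw [hn]; exact hcard T hT)
      exact ⟨κ, fun _ => h⟩
    · exact ⟨0, fun h => absurd h hT⟩
  choose κ hκ using hex
  obtain ⟨c, hc⟩ := Submodule.exists_forall_notMem_of_forall_ne_top
    (fun S : {S : Finset ι // Submodule.span ℝ (w '' (S : Set ι)) ≠ ⊤} =>
      Submodule.span ℝ (w '' ((S : Finset ι) : Set ι))) (fun S => S.2)
  have hc1 : ∀ S : Finset ι, Submodule.span ℝ (w '' (S : Set ι)) ≠ ⊤ →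
      c ∉ Submodule.span ℝ (w '' (S : Set ι)) := fun S hS => hc ⟨S, hS⟩
  have hc2 : ∀ S : Finset ι, Submodule.span ℝ (w '' (S : Set ι)) ≠ ⊤ →
      -c ∉ Submodule.span ℝ (w '' (S : Set ι)) := fun S hS => by
    rw [Submodule.neg_mem_iff]; exact hc1 S hS
  have hc0 : ∀ T, DSFacet w T → ∀ i ∈ T, κ T i c ≠ 0 := by
    intro T hT i hi h0
    refine hc1 (T.erase i) (fun h => ?_) ?_
    · have h1 := hge _ h
      have h2 := Finset.card_erase_lt_of_mem hi
      rw [hcard' T hT] at h2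
      omega
    · rw [(hκ T hT).1 c, ← Finset.add_sum_erase T _ hi, h0, zero_smul, zero_add]
      exact Submodule.sum_mem _ fun j hj => Submodule.smul_mem _ _
        (Submodule.subset_span ⟨j, hj, rfl⟩)
  have hk1 := ds_key w H κ hκ c hc1 hc0
  have hk2 := ds_key w H κ hκ (-c) hc2 (fun T hT i hi => by simpa using hc0 T hT i hi)
  let N1 : Finset ι → Finset ι := fun T => T.filter (fun i => κ T i c < 0)
  let N2 : Finset ι → Finset ι := fun T => T.filter (fun i => κ T i (-c) < 0)
  have hN : ∀ T, DSFacet w T → (N1 T).card + (N2 T).card = n := by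
    intro T hT
    rw [← hcard' T hT, ← Finset.card_filter_add_card_filter_not (s := T) (fun i => κ T i c < 0)]
    congr 2
    refine Finset.filter_congr fun i hi => ?_
    have := hc0 T hT i hi
    simp only [map_neg, not_lt, Left.neg_neg_iff]
    exact ⟨le_of_lt, fun h => lt_of_le_of_ne h this.symm⟩
  refine ⟨fun S hS => ?_, fun i => ((Finset.univ.filter (fun T => DSFacet w T)).filter
    (fun T => (N1 T).card = i)).card, fun k hk => ⟨?_, ?_⟩⟩
  · obtain ⟨T, hT, -⟩ := hk1 S hS
    exact ⟨T, hT.1, hT.2.1⟩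
  · rw [ds_count_aux w n k hk hcard' N1 (fun T => Finset.filter_subset _ _) (fun S hS => by
      simpa [N1, Finset.subset_iff] using hk1 S hS)]
    rw [← Finset.sum_fiberwise_of_maps_to (g := fun T => (N1 T).card) (t := Finset.range (n + 1))]
    · refine Finset.sum_congr rfl fun i _ => ?_
      rw [Finset.sum_congr rfl (g := fun _ => (n - i).choose (n - k))]
      · simp
      · intro T hT
        rw [(Finset.mem_filter.1 hT).2]
    · intro T hT
      have := hN T (by simpa using hT)
      simp only [Finset.mem_range]; omega
  · rw [ds_count_aux w n k hk hcard' N2 (fun T => Finset.filter_subset _ _) (fun S hS => by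
      simpa [N2, Finset.subset_iff] using hk2 S hS)]
    rw [← Finset.sum_fiberwise_of_maps_to (g := fun T => (N1 T).card) (t := Finset.range (n + 1))]
    · refine Finset.sum_congr rfl fun i _ => ?_
      rw [Finset.sum_congr rfl (g := fun _ => i.choose (n - k))]
      · simp
      · intro T hT
        obtain ⟨h1, h2⟩ := Finset.mem_filter.1 hT
        have := hN T (by simpa using h1)
        congr 1; omega
    · intro T hT
      have := hN T (by simpa using hT)
      simp only [Finset.mem_range]; omega

end DSCore

theorem ds_arith (g h : ℕ → ℕ) (h0 : g 0 = 1)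
    (H : ∀ k ≤ 13, g k = ∑ i ∈ Finset.range (13 + 1), h i * (13 - i).choose (13 - k) ∧
      g k = ∑ i ∈ Finset.range (13 + 1), h i * i.choose (13 - k)) :
    (g 7 : ℤ) = 8 * g 6 - 36 * g 5 + 120 * g 4
        - 330 * g 3 + 792 * g 2 - 1716 * g 1 + 3432 ∧
      (g 8 : ℤ) = 27 * g 6 - 159 * g 5 + 585 * g 4
        - 1683 * g 3 + 4125 * g 2 - 9009 * g 1 + 18018 ∧
      (g 9 : ℤ) = 50 * g 6 - 325 * g 5 + 1252 * g 4
        - 3685 * g 3 + 9130 * g 2 - 20020 * g 1 + 40040 ∧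
      (g 10 : ℤ) = 55 * g 6 - 374 * g 5 + 1474 * g 4
        - 4389 * g 3 + 10934 * g 2 - 24024 * g 1 + 48048 ∧
      (g 11 : ℤ) = 36 * g 6 - 250 * g 5 + 996 * g 4
        - 2982 * g 3 + 7448 * g 2 - 16380 * g 1 + 32760 ∧
      (g 12 : ℤ) = 13 * g 6 - 91 * g 5 + 364 * g 4
        - 1092 * g 3 + 2730 * g 2 - 6006 * g 1 + 12012 ∧
      (g 13 : ℤ) = 2 * g 6 - 14 * g 5 + 56 * g 4
        - 168 * g 3 + 420 * g 2 - 924 * g 1 + 1848 := by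
  have H1 := fun k hk => (H k hk).1
  have H2 := fun k hk => (H k hk).2
  have a0 := H1 0 (by norm_num)
  have a1 := H1 1 (by norm_num)
  have a2 := H1 2 (by norm_num)
  have a3 := H1 3 (by norm_num)
  have a4 := H1 4 (by norm_num)
  have a5 := H1 5 (by norm_num)
  have a6 := H1 6 (by norm_num)
  have a7 := H1 7 (by norm_num)
  have a8 := H1 8 (by norm_num)
  have a9 := H1 9 (by norm_num)
  have a10 := H1 10 (by norm_num)
  have a11 := H1 11 (by norm_num)
  have a12 := H1 12 (by norm_num)
  have a13 := H1 13 (by norm_num)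
  have b0 := H2 0 (by norm_num)
  have b1 := H2 1 (by norm_num)
  have b2 := H2 2 (by norm_num)
  have b3 := H2 3 (by norm_num)
  have b4 := H2 4 (by norm_num)
  have b5 := H2 5 (by norm_num)
  have b6 := H2 6 (by norm_num)
  clear H H1 H2
  simp only [Finset.sum_range_succ, Finset.sum_range_zero, Nat.choose, Nat.reduceSub,
    Nat.reduceAdd, mul_zero, add_zero, zero_add, mul_one] at *
  have e0 : h 13 = h 0 := by omega
  have e1 : h 12 = h 1 := by omega
  have e2 : h 11 = h 2 := by omega
  have e3 : h 10 = h 3 := by omega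
  have e4 : h 9 = h 4 := by omega
  have e5 : h 8 = h 5 := by omega
  have e6 : h 7 = h 6 := by omega
  clear b0 b1 b2 b3 b4 b5 b6
  refine ⟨?_, ?_, ?_, ?_, ?_, ?_, ?_⟩ <;> omega

section DSBridge

open Filter Topology

/-- a subset of a facet is exactly the contact set of some functional -/
theorem ds_expose {E : Type*} [AddCommGroup E] [Module ℝ E] [FiniteDimensional ℝ E]
    {ι : Type*} [Fintype ι] (w : ι → E) (T S : Finset ι) (hT : DSFacet w T)
    (hcard : T.card ≤ Module.finrank ℝ E) (hST : S ⊆ T) :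
    ∃ b : E →ₗ[ℝ] ℝ, (∀ i, b (w i) ≤ 1) ∧ ∀ i, i ∈ S ↔ b (w i) = 1 := by
  classical
  obtain ⟨a, ha1, ha2, hsp⟩ := hT
  obtain ⟨κ, -, hκ⟩ := ds_coords w T hsp hcard
  let g : E →ₗ[ℝ] ℝ := - ∑ i ∈ T \ S, κ i
  have hg : ∀ j ∈ T, g (w j) = if j ∈ S then 0 else -1 := by
    intro j hj
    simp only [g, LinearMap.neg_apply, LinearMap.sum_apply]
    rw [Finset.sum_congr rfl (fun i hi => hκ i (Finset.mem_sdiff.1 hi).1 j hj)]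
    by_cases h : j ∈ S <;> simp [h, hj]
  have ev : ∀ᶠ δ : ℝ in 𝓝[>] 0, ∀ i, i ∉ T → 0 < (1 - a (w i)) + δ * (- g (w i)) := by
    rw [eventually_all]
    intro i
    by_cases h : i ∈ T
    · simp [h]
    · have : a (w i) < 1 := lt_of_le_of_ne (ha1 i) (fun h' => h ((ha2 i).2 h'))
      filter_upwards [ds_event_pos (1 - a (w i)) (- g (w i)) (by linarith)] with δ h _
      exact h
  obtain ⟨δ, h1, hδ⟩ := (ev.and self_mem_nhdsWithin).exists
  have hδ : 0 < δ := hδ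
  refine ⟨a + δ • g, fun i => ?_, fun i => ?_⟩
  · simp only [LinearMap.add_apply, LinearMap.smul_apply, smul_eq_mul]
    by_cases hi : i ∈ T
    · rw [hg i hi, (ha2 i).1 hi]
      split_ifs <;> linarith
    · linarith [h1 i hi]
  · simp only [LinearMap.add_apply, LinearMap.smul_apply, smul_eq_mul]
    by_cases hi : i ∈ T
    · rw [hg i hi, (ha2 i).1 hi]
      split_ifs with h
      · simp [h]
      · simp [h, hδ.ne']
    · have := h1 i hi
      constructor
      · intro h; exact absurd (hST h) hi
      · intro h; linarith

theorem ds_dim {E : Type*} [AddCommGroup E] [Module ℝ E] [FiniteDimensional ℝ E]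
    (A : Set E) (o : E) (b : E →ₗ[ℝ] ℝ) (hb : ∀ x ∈ A, b (x - o) = 1) (hA : A.Nonempty) :
    Module.finrank ℝ (vectorSpan ℝ A) + 1
      = Module.finrank ℝ (Submodule.span ℝ ((fun x => x - o) '' A)) := by
  obtain ⟨s, hs⟩ := hA
  have hker : vectorSpan ℝ A ≤ LinearMap.ker b := by
    rw [vectorSpan_def, Submodule.span_le]
    rintro _ ⟨x, hx, y, hy, rfl⟩
    have h1 := hb x hx
    have h2 := hb y hy
    simp only [map_sub] at h1 h2
    simp only [vsub_eq_sub, SetLike.mem_coe, LinearMap.mem_ker, map_sub]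
    linarith
  have hsup : Submodule.span ℝ ((fun x => x - o) '' A)
      = vectorSpan ℝ A ⊔ Submodule.span ℝ {s - o} := by
    apply le_antisymm
    · rw [Submodule.span_le]
      rintro _ ⟨x, hx, rfl⟩
      have : x - o = (x -ᵥ s) + (s - o) := by simp
      simp only [SetLike.mem_coe]
      rw [this]
      exact Submodule.add_mem_sup (vsub_mem_vectorSpan ℝ hx hs)
        (Submodule.mem_span_singleton_self _)
    · apply sup_le
      · rw [vectorSpan_def, Submodule.span_le]
        rintro _ ⟨x, hx, y, hy, rfl⟩
        have : x -ᵥ y = (x - o) - (y - o) := by simp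
        simp only [SetLike.mem_coe]
        rw [this]
        exact Submodule.sub_mem _ (Submodule.subset_span ⟨x, hx, rfl⟩)
          (Submodule.subset_span ⟨y, hy, rfl⟩)
      · rw [Submodule.span_le, Set.singleton_subset_iff]
        exact Submodule.subset_span ⟨s, hs, rfl⟩
  have hinf : vectorSpan ℝ A ⊓ Submodule.span ℝ {s - o} = ⊥ := by
    rw [eq_bot_iff]
    rintro x ⟨h1, h2⟩
    obtain ⟨t, rfl⟩ := Submodule.mem_span_singleton.1 h2
    have h3 : b (t • (s - o)) = 0 := hker h1
    rw [map_smul, hb s hs] at h3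
    have : t = 0 := by simpa using h3
    simp [this]
  have hne : s - o ≠ 0 := by
    intro h
    have := hb s hs
    rw [h, map_zero] at this
    exact zero_ne_one this
  have := Submodule.finrank_sup_add_finrank_inf_eq (vectorSpan ℝ A) (Submodule.span ℝ {s - o})
  rw [hinf, finrank_bot, finrank_span_singleton hne, ← hsup] at this
  omega

theorem ds_vectorSpan_hull {E : Type*} [AddCommGroup E] [Module ℝ E] (A : Set E) :
    vectorSpan ℝ (convexHull ℝ A) = vectorSpan ℝ A := by
  rw [← direction_affineSpan, affineSpan_convexHull, direction_affineSpan]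

variable {E : Type*} [NormedAddCommGroup E] [NormedSpace ℝ E] [FiniteDimensional ℝ E]

theorem ds_hull (K : Set E) (hK : IsCompact K) (hKc : Convex ℝ K)
    (hfin : (K.extremePoints ℝ).Finite) (F : Set E) (hF : IsExposed ℝ K F) :
    F = convexHull ℝ (F ∩ K.extremePoints ℝ) := by
  have h1 := closure_convexHull_extremePoints (hF.isCompact hK) (hF.convex hKc)
  rw [hF.isExtreme.extremePoints_eq] at h1
  rw [((hfin.inter_of_right F).isClosed_convexHull ℝ).closure_eq] at h1
  exact h1.symm

theorem ds_le (V : Finset E) (o : E) (b : E →ₗ[ℝ] ℝ)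
    (hb : ∀ i : V, b ((i : E) - o) ≤ 1) : ∀ x ∈ convexHull ℝ (V : Set E), b (x - o) ≤ 1 := by
  intro x hx
  have hc : Convex ℝ {x : E | b x ≤ 1 + b o} := convex_halfSpace_le b.isLinear _
  have : convexHull ℝ (V : Set E) ⊆ {x : E | b x ≤ 1 + b o} := by
    apply convexHull_min _ hc
    intro v hv
    have := hb ⟨v, hv⟩
    simp only [map_sub] at this
    show b v ≤ 1 + b o
    linarith
  have h : b x ≤ 1 + b o := this hx
  rw [map_sub]; linarith

/-- from a functional to an exposed face -/
theorem ds_face_of_functional (V : Finset E) (o : E) (b : E →ₗ[ℝ] ℝ)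
    (hb : ∀ i : V, b ((i : E) - o) ≤ 1) (S : Finset V) (hS : ∀ i, i ∈ S ↔ b ((i : E) - o) = 1)
    (hne : S.Nonempty) :
    ∃ F, IsExposed ℝ (convexHull ℝ (V : Set E)) F ∧ F.Nonempty ∧
      F ∩ (V : Set E) = Subtype.val '' (S : Set V) := by
  have hle := ds_le V o b hb
  obtain ⟨s, hs⟩ := hne
  have hsV : (s : E) ∈ convexHull ℝ (V : Set E) := subset_convexHull ℝ _ s.2
  have hs1 := (hS s).1 hs
  have key : ∀ x ∈ convexHull ℝ (V : Set E),
      ((∀ y ∈ convexHull ℝ (V : Set E), b y ≤ b x) ↔ b (x - o) = 1) := by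
    intro x hx
    simp only [map_sub] at hle hs1 ⊢
    constructor
    · intro h
      have h1 := h _ hsV
      have h2 := hle x hx
      linarith
    · intro h y hy
      have := hle y hy
      linarith
  refine ⟨(LinearMap.toContinuousLinearMap b).toExposed _,
    ContinuousLinearMap.toExposed.isExposed, ⟨s, hsV, (key s hsV).2 hs1⟩, ?_⟩
  ext x
  constructor
  · rintro ⟨⟨h1, h2⟩, h3⟩
    exact ⟨⟨x, h3⟩, (hS _).2 ((key x h1).1 h2), rfl⟩
  · rintro ⟨i, hi, rfl⟩
    have hi' : (i : E) ∈ convexHull ℝ (V : Set E) := subset_convexHull ℝ _ i.2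
    exact ⟨⟨hi', (key i hi').2 ((hS i).1 hi)⟩, i.2⟩

/-- from an exposed face to a functional -/
theorem ds_functional_of_face (K : Set E) (o : E) (ho : o ∈ interior K) (F : Set E)
    (hF : IsExposed ℝ K F) (hne : F.Nonempty)
    (hd : Module.finrank ℝ (vectorSpan ℝ F) < Module.finrank ℝ E) :
    ∃ b : E →ₗ[ℝ] ℝ, (∀ x ∈ K, b (x - o) ≤ 1) ∧ ∀ x ∈ K, (x ∈ F ↔ b (x - o) = 1) := by
  obtain ⟨l, hl⟩ := hF hne
  obtain ⟨x0, hx0⟩ := hne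
  have hx0' : x0 ∈ K ∧ ∀ y ∈ K, l y ≤ l x0 := by rw [hl] at hx0; exact hx0
  have hoK := interior_subset ho
  have hlt : l o < l x0 := by
    refine lt_of_le_of_ne (hx0'.2 o hoK) fun heq => ?_
    have hFK : F = K := by
      apply Set.Subset.antisymm hF.subset
      intro y hy
      have hcont : Tendsto (fun t : ℝ => o + t • (o - y)) (𝓝[>] 0) (𝓝 o) := by
        have : Tendsto (fun t : ℝ => o + t • (o - y)) (𝓝 0) (𝓝 (o + (0 : ℝ) • (o - y))) := by
          apply Continuous.tendsto; fun_prop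
        simp only [zero_smul, add_zero] at this
        exact this.mono_left nhdsWithin_le_nhds
      obtain ⟨t, ht, ht0⟩ := ((hcont.eventually (mem_interior_iff_mem_nhds.1 ho)).and
        self_mem_nhdsWithin).exists
      have ht0 : 0 < t := ht0
      have h1 := hx0'.2 _ ht
      simp only [map_add, map_smul, map_sub, smul_eq_mul] at h1
      have h2 : l o ≤ l y := by
        by_contra h
        push Not at h
        nlinarith [mul_pos ht0 (sub_pos.2 h)]
      rw [hl]
      exact ⟨hy, fun z hz => (hx0'.2 z hz).trans (heq ▸ h2)⟩
    have h3 := affineSpan_eq_top_of_nonempty_interior (s := K)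
      ⟨o, interior_mono (subset_convexHull ℝ K) ho⟩
    rw [hFK, ← direction_affineSpan, h3, AffineSubspace.direction_top, finrank_top] at hd
    exact lt_irrefl _ hd
  have hpos : 0 < l x0 - l o := sub_pos.2 hlt
  refine ⟨(l x0 - l o)⁻¹ • (l : E →ₗ[ℝ] ℝ), fun x hx => ?_, fun x hx => ?_⟩
  · have := hx0'.2 x hx
    simp only [LinearMap.smul_apply, smul_eq_mul, ContinuousLinearMap.coe_coe, map_sub]
    rw [← mul_sub, inv_mul_le_iff₀ hpos]
    linarith
  · have := hx0'.2 x hx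
    simp only [LinearMap.smul_apply, smul_eq_mul, ContinuousLinearMap.coe_coe, map_sub]
    rw [← mul_sub, inv_mul_eq_iff_eq_mul₀ hpos.ne']
    rw [hl]
    constructor
    · intro h
      have := h.2 x0 hx0'.1
      linarith
    · intro h
      exact ⟨hx, fun y hy => (hx0'.2 y hy).trans (by linarith)⟩

/-- the ray hypothesis -/
theorem ds_ray (V : Finset E) (o : E) (ho : o ∈ interior (convexHull ℝ (V : Set E))) (x : E) :
    ∃ b : E →ₗ[ℝ] ℝ, (∀ i : V, b ((i : E) - o) ≤ 1) ∧ ∃ μ : V → ℝ, (∀ i, 0 ≤ μ i) ∧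
      (∀ i, μ i ≠ 0 → b ((i : E) - o) = 1) ∧ x = ∑ i, μ i • ((i : E) - o) := by
  by_cases hx : x = 0
  · exact ⟨0, by simp, 0, by simp, by simp, by simp [hx]⟩
  set K := convexHull ℝ (V : Set E) with hKdef
  have hKc : Convex ℝ K := convex_convexHull ℝ _
  have hK : IsCompact K := V.finite_toSet.isCompact_convexHull ℝ
  have hcp : IsCompact ((fun t : ℝ => o + t • x) ⁻¹' K) :=
    ((Homeomorph.addLeft o).isClosedEmbedding.comp
      (isClosedEmbedding_smul_left (𝕜 := ℝ) hx)).isCompact_preimage hK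
  have hcont : Continuous (fun t : ℝ => o + t • x) := by fun_prop
  obtain ⟨t, htK, htmax⟩ := hcp.exists_isMaxOn (f := id)
    ⟨0, by simpa using interior_subset ho⟩ continuous_id.continuousOn
  have htK : o + t • x ∈ K := htK
  have hmax : ∀ s : ℝ, o + s • x ∈ K → s ≤ t := fun s hs => htmax hs
  have hbig : ∀ s : ℝ, o + s • x ∈ interior K → s < t := by
    intro s hs
    have h1 : ∀ᶠ r in 𝓝 s, o + r • x ∈ K :=
      hcont.continuousAt.eventually (mem_interior_iff_mem_nhds.1 hs)
    obtain ⟨r, hr, hr2⟩ := ((h1.filter_mono nhdsWithin_le_nhds).and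
      (self_mem_nhdsWithin (a := s) (s := Set.Ioi s))).exists
    exact lt_of_lt_of_le hr2 (hmax r hr)
  have ht0 : 0 < t := hbig 0 (by simpa using ho)
  have hnot : o + t • x ∉ interior K := fun h => lt_irrefl _ (hbig t h)
  obtain ⟨f, hf⟩ := geometric_hahn_banach_open_point hKc.interior isOpen_interior hnot
  have hfo := hf o ho
  have hfK : ∀ z ∈ K, f z ≤ f (o + t • x) := by
    intro z hz
    have hz' : z ∈ closure (interior K) := by
      rw [hKc.closure_interior_eq_closure_of_nonempty_interior ⟨o, ho⟩]
      exact subset_closure hz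
    have hcl : IsClosed {z | f z ≤ f (o + t • x)} := isClosed_le f.continuous continuous_const
    exact closure_minimal (fun y hy => (hf y hy).le) hcl hz'
  set r := f (o + t • x) - f o with hr
  have hr0 : 0 < r := sub_pos.2 hfo
  have hb1 : ∀ i : V, (r⁻¹ • (f : E →ₗ[ℝ] ℝ)) ((i : E) - o) ≤ 1 := by
    intro i
    have := hfK i (subset_convexHull ℝ _ i.2)
    simp only [LinearMap.smul_apply, smul_eq_mul, ContinuousLinearMap.coe_coe, map_sub]
    rw [← mul_sub, inv_mul_le_iff₀ hr0]
    linarith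
  obtain ⟨ν, hν0, hν1, hν⟩ := Finset.mem_convexHull'.1 htK
  have hsum : t • x = ∑ i : V, ν i • ((i : E) - o) := by
    have e1 : ∑ i : V, ν i • ((i : E) - o) = ∑ y ∈ V, ν y • (y - o) :=
      Finset.sum_coe_sort V (fun y => ν y • (y - o))
    rw [e1]
    simp only [smul_sub, Finset.sum_sub_distrib, hν, ← Finset.sum_smul, hν1]
    simp
  refine ⟨r⁻¹ • (f : E →ₗ[ℝ] ℝ), hb1, fun i => t⁻¹ * ν i, fun i => ?_, ?_, ?_⟩
  · exact mul_nonneg (inv_nonneg.2 ht0.le) (hν0 _ i.2)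
  · set b := r⁻¹ • (f : E →ₗ[ℝ] ℝ) with hb
    have hbt : b (t • x) = 1 := by
      simp only [hb, LinearMap.smul_apply, ContinuousLinearMap.coe_coe, smul_eq_mul]
      have : f (t • x) = r := by simp [hr]
      rw [this, inv_mul_cancel₀ hr0.ne']
    have hs1 : ∑ i : V, ν i = 1 := by
      rw [← hν1]; exact Finset.sum_coe_sort V ν
    have hle : ∀ i ∈ (Finset.univ : Finset V), ν i * b ((i : E) - o) ≤ ν i := fun i _ => by
      have h1 := hν0 _ i.2
      have h2 := hb1 i
      nlinarith
    have heq : ∑ i : V, ν i * b ((i : E) - o) = ∑ i : V, ν i := by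
      rw [hs1, ← hbt, hsum, map_sum]
      simp only [map_smul, smul_eq_mul]
    intro i hi
    have h1 := (Finset.sum_eq_sum_iff_of_le hle).1 heq i (Finset.mem_univ _)
    have h2 : ν i ≠ 0 := fun h => hi (by simp [h])
    exact mul_left_cancel₀ h2 (by rw [h1, mul_one])
  · simp only [mul_smul, ← Finset.smul_sum, ← hsum]
    rw [smul_smul, inv_mul_cancel₀ ht0.ne', one_smul]

end DSBridge

open Classical in
theorem ds_polytope {n : ℕ} (hn0 : 0 < n) (P : ConvexPolytope n) (hs : P.IsSimplicial) :
    ∃ g h : ℕ → ℕ, g 0 = 1 ∧ (∀ k < n, P.fcount k = g (k + 1)) ∧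
      ∀ k ≤ n, g k = ∑ i ∈ Finset.range (n + 1), h i * (n - i).choose (n - k) ∧
        g k = ∑ i ∈ Finset.range (n + 1), h i * i.choose (n - k) := by
  have hK : IsCompact P.carrier := P.verts.finite_toSet.isCompact_convexHull ℝ
  have hKc : Convex ℝ P.carrier := convex_convexHull ℝ _
  have hfin : (P.carrier.extremePoints ℝ).Finite :=
    P.verts.finite_toSet.subset extremePoints_convexHull_subset
  obtain ⟨o, ho⟩ : (interior P.carrier).Nonempty := P.nonempty_int
  obtain ⟨V, hV⟩ : ∃ V : Finset (EuclideanSpace ℝ (Fin n)),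
      (V : Set _) = P.carrier.extremePoints ℝ := ⟨hfin.toFinset, by simp⟩
  have hull : ∀ F, IsExposed ℝ P.carrier F → F = convexHull ℝ (F ∩ V) := by
    rw [hV]; exact ds_hull P.carrier hK hKc hfin
  have hKV : P.carrier = convexHull ℝ (V : Set (EuclideanSpace ℝ (Fin n))) := by
    have h1 := hull _ (IsExposed.refl P.carrier)
    rwa [Set.inter_eq_right.2 (by rw [hV]; exact extremePoints_subset)] at h1
  have hVK : ∀ i : V, (i : EuclideanSpace ℝ (Fin n)) ∈ P.carrier := fun i => by
    rw [hKV]; exact subset_convexHull ℝ _ i.2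
  have hfr : Module.finrank ℝ (EuclideanSpace ℝ (Fin n)) = n := by simp
  let w : V → EuclideanSpace ℝ (Fin n) := fun i => (i : EuclideanSpace ℝ (Fin n)) - o
  have himg : ∀ S : Finset V, (fun x => x - o) '' (Subtype.val '' (S : Set V))
      = w '' (S : Set V) := fun S => by rw [Set.image_image]
  have H : ∀ x, ∃ b : EuclideanSpace ℝ (Fin n) →ₗ[ℝ] ℝ, (∀ i, b (w i) ≤ 1) ∧
      ∃ μ : V → ℝ, (∀ i, 0 ≤ μ i) ∧ (∀ i, μ i ≠ 0 → b (w i) = 1) ∧ x = ∑ i, μ i • w i :=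
    ds_ray V o (hKV ▸ ho)
  -- dimension of the hull of the vertices of a face
  have hdim : ∀ S : Finset V, DSFace w S → S.Nonempty →
      sdim (convexHull ℝ (Subtype.val '' (S : Set V))) + 1
        = Module.finrank ℝ (Submodule.span ℝ (w '' (S : Set V))) := by
    rintro S ⟨b, -, hb⟩ hne
    rw [sdim, ds_vectorSpan_hull, ← himg]
    apply ds_dim _ o b
    · rintro _ ⟨i, hi, rfl⟩
      exact hb i hi
    · exact (Finset.coe_nonempty.2 hne).image _
  have hcard : ∀ T, DSFacet w T → T.card ≤ n := by
    intro T hT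
    obtain ⟨a, ha1, ha2, hsp⟩ := id hT
    have hne : T.Nonempty := by
      rw [Finset.nonempty_iff_ne_empty]
      rintro rfl
      have : Module.finrank ℝ (⊤ : Submodule ℝ (EuclideanSpace ℝ (Fin n))) = 0 := by
        rw [← hsp]; simp
      rw [finrank_top, hfr] at this
      omega
    obtain ⟨F, hF, hFne, hFV⟩ := ds_face_of_functional V o a ha1 T ha2 hne
    rw [← hKV] at hF
    have hFh := hull F hF
    rw [hFV] at hFh
    have hd := hdim T ⟨a, ha1, fun i hi => (ha2 i).1 hi⟩ hne
    rw [hsp, finrank_top, hfr, ← hFh] at hd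
    obtain ⟨s, hsn, -, hsF⟩ := hs F ⟨hF, hFne, by omega⟩
    have hsub : Subtype.val '' (T : Set V) ⊆ (s : Set (EuclideanSpace ℝ (Fin n))) := by
      rw [← hFV, hV, ← hF.isExtreme.extremePoints_eq, hsF]
      exact extremePoints_convexHull_subset
    refine le_trans ?_ hsn.le
    rw [← Finset.card_image_of_injective T Subtype.val_injective]
    apply Finset.card_le_card
    rw [← Finset.coe_subset, Finset.coe_image]
    exact hsub
  obtain ⟨hsubT, h, hh⟩ := ds_count w n hfr H hcard
  have hdim' : ∀ S : Finset V, DSFace w S → S.Nonempty →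
      sdim (convexHull ℝ (Subtype.val '' (S : Set V))) + 1 = S.card := by
    intro S hS hne
    rw [hdim S hS hne]
    obtain ⟨T, hT, hST⟩ := hsubT S hS
    obtain ⟨-, hli⟩ := ds_li w T hT.choose_spec.2.2 (by rw [hfr]; exact hcard T hT)
    have hli2 : LinearIndependent ℝ (fun i : S => w i) :=
      hli.comp (fun i : S => (⟨i, hST i.2⟩ : T)) (fun i j hij => by
        apply Subtype.ext
        simpa using hij)
    have h3 := finrank_span_eq_card hli2
    have hr : Set.range (fun i : S => w i) = w '' (S : Set V) := by
      ext x; simp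
    rw [hr] at h3
    simpa using h3
  refine ⟨fun k => (Finset.univ.filter (fun S : Finset V => DSFace w S ∧ S.card = k)).card,
    h, ?_, ?_, hh⟩
  · rw [Finset.card_eq_one]
    refine ⟨∅, ?_⟩
    ext S
    simp only [Finset.mem_filter, Finset.mem_univ, true_and, Finset.mem_singleton,
      Finset.card_eq_zero]
    constructor
    · exact fun h => h.2
    · rintro rfl
      exact ⟨⟨0, by simp, by simp⟩, rfl⟩
  · intro k hk
    -- the hull of the vertex set of a face is an exposed face with these vertices
    have hface : ∀ S : Finset V, DSFace w S → S.Nonempty →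
        IsExposed ℝ P.carrier (convexHull ℝ (Subtype.val '' (S : Set V))) ∧
        (convexHull ℝ (Subtype.val '' (S : Set V))) ∩ (V : Set _)
          = Subtype.val '' (S : Set V) := by
      intro S hS hne
      obtain ⟨T, hT, hST⟩ := hsubT S hS
      obtain ⟨b, hb1, hb2⟩ := ds_expose w T S hT (by rw [hfr]; exact hcard T hT) hST
      obtain ⟨F, hF, hFne, hFV⟩ := ds_face_of_functional V o b hb1 S hb2 hne
      rw [← hKV] at hF
      have hFh := hull F hF
      rw [hFV] at hFh
      rw [← hFh]
      exact ⟨hF, hFV⟩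
    have himage : P.faces k = (fun S : Finset V => convexHull ℝ (Subtype.val '' (S : Set V))) ''
        (Finset.univ.filter (fun S : Finset V => DSFace w S ∧ S.card = k + 1) :
          Finset (Finset V)) := by
      ext F
      constructor
      · rintro ⟨hF, hFne, hFd⟩
        obtain ⟨b, hb1, hb2⟩ := ds_functional_of_face P.carrier o ho F hF hFne
          (by rw [hfr]; unfold sdim at hFd; omega)
        let S : Finset V := Finset.univ.filter (fun i => (i : EuclideanSpace ℝ (Fin n)) ∈ F)
        have hSF : F ∩ (V : Set _) = Subtype.val '' (S : Set V) := by
          ext x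
          simp [S, and_comm]
        have hFh := hull F hF
        rw [hSF] at hFh
        have hSne : S.Nonempty := by
          rw [Finset.nonempty_iff_ne_empty]
          intro h0
          rw [h0] at hFh
          simp only [Finset.coe_empty, Set.image_empty, convexHull_empty] at hFh
          exact hFne.ne_empty hFh
        have hSf : DSFace w S := ⟨b, fun i => hb1 i (hVK i), fun i hi =>
          (hb2 i (hVK i)).1 (Finset.mem_filter.1 hi).2⟩
        have hd := hdim' S hSf hSne
        rw [← hFh, hFd] at hd
        exact ⟨S, by simpa using ⟨hSf, hd.symm⟩, hFh.symm⟩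
      · rintro ⟨S, hS, rfl⟩
        obtain ⟨hSf, hSc⟩ : DSFace w S ∧ S.card = k + 1 := by simpa using hS
        have hne : S.Nonempty := Finset.card_pos.1 (by omega)
        refine ⟨(hface S hSf hne).1, ((Finset.coe_nonempty.2 hne).image _).convexHull, ?_⟩
        have := hdim' S hSf hne
        dsimp only
        omega
    rw [ConvexPolytope.fcount, himage, Set.ncard_image_of_injOn, Set.ncard_coe_finset]
    intro S hS S' hS' heq
    obtain ⟨hSf, hSc⟩ : DSFace w S ∧ S.card = k + 1 := by simpa using hS
    obtain ⟨hSf', hSc'⟩ : DSFace w S' ∧ S'.card = k + 1 := by simpa using hS'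
    have h1 := (hface S hSf (Finset.card_pos.1 (by omega))).2
    have h2 := (hface S' hSf' (Finset.card_pos.1 (by omega))).2
    dsimp only at heq
    rw [heq, h2] at h1
    exact Finset.coe_injective (Subtype.val_injective.image_injective h1.symm)

/-- The Dehn–Sommerville relations for a `13`-dimensional simplicial convex polytope. -/
theorem dehn_sommerville_dim_thirteen (P : ConvexPolytope 13) (hs : P.IsSimplicial) :
    (P.fcount 6 : ℤ) = 8 * P.fcount 5 - 36 * P.fcount 4 + 120 * P.fcount 3
        - 330 * P.fcount 2 + 792 * P.fcount 1 - 1716 * P.fcount 0 + 3432 ∧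
      (P.fcount 7 : ℤ) = 27 * P.fcount 5 - 159 * P.fcount 4 + 585 * P.fcount 3
        - 1683 * P.fcount 2 + 4125 * P.fcount 1 - 9009 * P.fcount 0 + 18018 ∧
      (P.fcount 8 : ℤ) = 50 * P.fcount 5 - 325 * P.fcount 4 + 1252 * P.fcount 3
        - 3685 * P.fcount 2 + 9130 * P.fcount 1 - 20020 * P.fcount 0 + 40040 ∧
      (P.fcount 9 : ℤ) = 55 * P.fcount 5 - 374 * P.fcount 4 + 1474 * P.fcount 3
        - 4389 * P.fcount 2 + 10934 * P.fcount 1 - 24024 * P.fcount 0 + 48048 ∧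
      (P.fcount 10 : ℤ) = 36 * P.fcount 5 - 250 * P.fcount 4 + 996 * P.fcount 3
        - 2982 * P.fcount 2 + 7448 * P.fcount 1 - 16380 * P.fcount 0 + 32760 ∧
      (P.fcount 11 : ℤ) = 13 * P.fcount 5 - 91 * P.fcount 4 + 364 * P.fcount 3
        - 1092 * P.fcount 2 + 2730 * P.fcount 1 - 6006 * P.fcount 0 + 12012 ∧
      (P.fcount 12 : ℤ) = 2 * P.fcount 5 - 14 * P.fcount 4 + 56 * P.fcount 3
        - 168 * P.fcount 2 + 420 * P.fcount 1 - 924 * P.fcount 0 + 1848 := by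
  obtain ⟨g, h, h0, hg, hh⟩ := ds_polytope (by norm_num) P hs
  rw [hg 0 (by norm_num), hg 1 (by norm_num), hg 2 (by norm_num), hg 3 (by norm_num),
    hg 4 (by norm_num), hg 5 (by norm_num), hg 6 (by norm_num), hg 7 (by norm_num),
    hg 8 (by norm_num), hg 9 (by norm_num), hg 10 (by norm_num), hg 11 (by norm_num),
    hg 12 (by norm_num)]
  exact ds_arith g h h0 hh
end
end
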